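/- arXiv:1012.4145 — 6 statements merged into one kernel-verified Lean document; each statement's English description precedes it below -/
import Mathlib

section
/- Let λ, t₁, t₂ ∈ ℝ with λ ≠ t₁, λ ≠ −t₂ and t₁ + t₂ ≠ 0. Then lim_{r→0⁺} b(r) · e^{πi b(r)² λ(λ + 2 t₂)} · e^{−2πi b(r)² t₁ t₂} · G_{b(r)}(i b(r)(t₁ − λ)) · G_{b(r)}(i b(r)(t₂ + λ)) / G_{b(r)}(i b(r)(t₁ + t₂)) = (1/2π) · Γ(i(t₁ − λ)) Γ(i(t₂ + λ)) / Γ(i(t₁ + t₂)). (This is the classical limit of the rescaled inverse quantum intertwining kernel b²·𝓕⌈bλ, bt; bt₁, bt₂⌉_* towards the classical ax+b kernel (1/2π) δ(t−t₁−t₂) Γ(−iλ+it₁)Γ(it₂+iλ)/Γ(it), with the delta factor removed.) -/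
open Complex Filter Topology

/-- ζ̄_b = exp(−πi/4 − (πi/12)(b² + b^{−2})). -/
noncomputable def zetaBar (b : ℂ) : ℂ :=
  Complex.exp (-(Real.pi * Complex.I) / 4 - (Real.pi * Complex.I) / 12 * (b ^ 2 + b⁻¹ ^ 2))

/-- The quantum dilogarithm `G_b(x)`, defined for `Im(b²) > 0` by the infinite product
`ζ̄_b · ∏_{n=1}^∞ (1 − e^{2πi b⁻¹(x − n b⁻¹)}) / ∏_{n=0}^∞ (1 − e^{2πi b(x + n b)})`. -/
noncomputable def Gb (b x : ℂ) : ℂ :=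
  zetaBar b *
      (∏' n : ℕ, (1 - Complex.exp (2 * Real.pi * Complex.I * b⁻¹ * (x - (n + 1) * b⁻¹)))) /
    (∏' n : ℕ, (1 - Complex.exp (2 * Real.pi * Complex.I * b * (x + n * b))))

/-- `b(r) = e^{iπ/4} √r`, so that `b(r)² = i r`. -/
noncomputable def br (r : ℝ) : ℂ :=
  Complex.exp (Real.pi * Complex.I / 4) * (Real.sqrt r : ℂ)

/- Both products in `Gb` are `q`-Pochhammer symbols, with nomes `q = e^{2πi b²}` and
`q̃ = e^{-2πi b⁻²}` exchanged by `τ ↦ -1/τ` for `τ = b²`. The modularity of the Dedekind eta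
function turns the constant `zetaBar b` into `-i b (q; q)_∞ / (q̃; q̃)_∞`, and then
`b G_b(i b u) G_b(i b v) / G_b(i b (u + v))` is exactly `1 / 2π` times a `q`-beta function of
`(i u, i v)` at `t = -2πi b² = 2πr`, times a quotient of symbols of nome `q̃ = e^{-2π/r}`, which
tends to `1`. The identity
`sinh x sinh (x + u + v) = sinh (x + u) sinh (x + v) - sinh u sinh v`
writes the `q`-beta function as a product of factors `1 + O(n⁻²)`, uniformly in small `t`, so that
dominated convergence leads to Gauss's product for `Γ(i u) Γ(i v) / Γ(i (u + v))`. -/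

section Sinh

theorem one_sub_exp_neg (z : ℂ) : 1 - cexp (-z) = 2 * cexp (-(z / 2)) * sinh (z / 2) := by
  have hsq : cexp (-z) = cexp (-(z / 2)) * cexp (-(z / 2)) := by
    rw [← Complex.exp_add]
    ring_nf
  have hinv : cexp (-(z / 2)) * cexp (z / 2) = 1 := by
    rw [← Complex.exp_add, neg_add_cancel, Complex.exp_zero]
  rw [sinh, hsq]
  linear_combination -hinv

theorem sinh_mul_sinh_add_add (x u v : ℂ) :
    sinh x * sinh (x + u + v) = sinh (x + u) * sinh (x + v) - sinh u * sinh v := by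
  simp only [sinh_add, cosh_add]
  linear_combination (-sinh u * sinh v) * cosh_sq_sub_sinh_sq x

theorem norm_sinh_le {z : ℂ} (hz : ‖z‖ ≤ 1) : ‖sinh z‖ ≤ 2 * ‖z‖ := by
  have hneg : ‖cexp (-z) - 1‖ ≤ 2 * ‖z‖ := by
    simpa only [norm_neg] using norm_exp_sub_one_le (x := -z) (by rwa [norm_neg])
  calc ‖sinh z‖ = ‖(cexp z - 1) - (cexp (-z) - 1)‖ / 2 := by
        rw [sinh, norm_div, Complex.norm_two, sub_sub_sub_cancel_right]
    _ ≤ (2 * ‖z‖ + 2 * ‖z‖) / 2 := by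
        gcongr
        exact (norm_sub_le _ _).trans (add_le_add (norm_exp_sub_one_le hz) hneg)
    _ = 2 * ‖z‖ := by ring

theorem normSq_sinh (z : ℂ) : normSq (sinh z) = Real.sinh z.re ^ 2 + Real.sin z.im ^ 2 := by
  have hsinh : sinh z = (Real.sinh z.re * Real.cos z.im : ℝ) +
      (Real.cosh z.re * Real.sin z.im : ℝ) * I := by
    conv_lhs => rw [← re_add_im z, sinh_add, sinh_mul_I, cosh_mul_I]
    push_cast
    ring
  rw [hsinh, normSq_add_mul_I]
  linear_combination Real.sin z.im ^ 2 * Real.cosh_sq_sub_sinh_sq z.re +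
    Real.sinh z.re ^ 2 * Real.sin_sq_add_cos_sq z.im

theorem two_div_pi_mul_norm_le_norm_sinh {z : ℂ} (hz : |z.im| ≤ Real.pi / 2) :
    2 / Real.pi * ‖z‖ ≤ ‖sinh z‖ := by
  have hre : z.re ^ 2 ≤ Real.sinh z.re ^ 2 := by
    rw [← sq_abs z.re, ← sq_abs (Real.sinh _), Real.abs_sinh]
    gcongr
    exact Real.self_le_sinh_iff.2 (abs_nonneg _)
  have him : (2 / Real.pi) ^ 2 * z.im ^ 2 ≤ Real.sin z.im ^ 2 := by
    rw [← sq_abs z.im, ← sq_abs (Real.sin _), ← mul_pow]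
    gcongr
    exact Real.mul_abs_le_abs_sin hz
  have hpi : (2 / Real.pi) ^ 2 ≤ 1 :=
    pow_le_one₀ (by positivity) ((div_le_one Real.pi_pos).2 Real.two_le_pi)
  refine le_of_sq_le_sq ?_ (norm_nonneg _)
  calc (2 / Real.pi * ‖z‖) ^ 2 = (2 / Real.pi) ^ 2 * z.re ^ 2 + (2 / Real.pi) ^ 2 * z.im ^ 2 := by
        rw [mul_pow, Complex.sq_norm, normSq_apply]
        ring
    _ ≤ Real.sinh z.re ^ 2 + Real.sin z.im ^ 2 :=
        add_le_add ((mul_le_of_le_one_left (sq_nonneg _) hpi).trans hre) him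
    _ = ‖sinh z‖ ^ 2 := by rw [Complex.sq_norm, normSq_sinh]

theorem tendsto_sinh_mul_div (a : ℂ) :
    Tendsto (fun t : ℂ => sinh (t * a / 2) / t) (𝓝[≠] 0) (𝓝 (a / 2)) := by
  have h : HasDerivAt (fun t : ℂ => sinh (t * a / 2)) (a / 2) 0 := by
    simpa using (((hasDerivAt_id (0 : ℂ)).mul_const a).div_const 2).csinh
  refine h.tendsto_slope_zero.congr fun t => ?_
  simp [div_eq_inv_mul]

end Sinh

section QPochhammer

/-- The infinite `q`-Pochhammer symbol `(a; q)_∞ = ∏_{n ≥ 0} (1 - a qⁿ)`, in terms of which both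
products of the quantum dilogarithm are written. -/
noncomputable def qPochhammer (a q : ℂ) : ℂ :=
  ∏' n : ℕ, (1 - a * q ^ n)

variable {a q : ℂ}

theorem summable_norm_neg_mul_pow (a : ℂ) (hq : ‖q‖ < 1) :
    Summable fun n : ℕ => ‖-(a * q ^ n)‖ := by
  simpa only [norm_neg, norm_mul, norm_pow] using
    (summable_geometric_of_lt_one (norm_nonneg q) hq).mul_left ‖a‖

theorem multipliable_one_sub_mul_pow (a : ℂ) (hq : ‖q‖ < 1) :
    Multipliable fun n : ℕ => 1 - a * q ^ n := by
  simpa only [sub_eq_add_neg] using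
    multipliable_one_add_of_summable (summable_norm_neg_mul_pow a hq)

theorem qPochhammer_ne_zero (hq : ‖q‖ < 1) (ha : ∀ n : ℕ, 1 - a * q ^ n ≠ 0) :
    qPochhammer a q ≠ 0 := by
  simpa only [qPochhammer, sub_eq_add_neg] using
    tprod_one_add_ne_zero_of_summable (by simpa only [← sub_eq_add_neg] using ha)
      (summable_norm_neg_mul_pow a hq)

theorem qPochhammer_eq_one_sub_mul (a : ℂ) (hq : ‖q‖ < 1) :
    qPochhammer a q = (1 - a) * qPochhammer (a * q) q := by
  have hshift (n : ℕ) : 1 - a * q ^ (n + 1) = 1 - a * q * q ^ n := by ring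
  rw [qPochhammer, tprod_eq_zero_mul', pow_zero, mul_one]
  · simp only [hshift, qPochhammer]
  · simpa only [hshift] using multipliable_one_sub_mul_pow (a * q) hq

theorem tendsto_qPochhammer_mul_self (a : ℂ) :
    Tendsto (fun q => qPochhammer (a * q) q) (𝓝 0) (𝓝 1) := by
  have hbound : Summable fun n : ℕ => ‖a‖ * (1 / 2) ^ (n + 1) :=
    ((summable_nat_add_iff 1).2 summable_geometric_two).mul_left _
  have hterm (n : ℕ) : Tendsto (fun q : ℂ => -(a * q ^ (n + 1))) (𝓝 0) (𝓝 0) := by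
    have hcont : Continuous fun q : ℂ => -(a * q ^ (n + 1)) := by fun_prop
    simpa using hcont.tendsto 0
  have hlim := tendsto_tprod_one_add_of_dominated_convergence hbound hterm (by
    filter_upwards [Metric.closedBall_mem_nhds (0 : ℂ) one_half_pos] with q hq n
    rw [norm_neg, norm_mul, norm_pow]
    gcongr
    exact mem_closedBall_zero_iff.1 hq)
  simpa only [qPochhammer, mul_assoc, ← pow_succ', add_zero, tprod_one, ← sub_eq_add_neg] using hlim

theorem eta_eq_qPochhammer (τ : ℂ) :
    ModularForm.eta τ =
      cexp (2 * Real.pi * I * τ / 24) *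
        qPochhammer (cexp (2 * Real.pi * I * τ)) (cexp (2 * Real.pi * I * τ)) := by
  simp only [ModularForm.eta, qPochhammer, ModularForm.eta_q_eq_pow, Function.Periodic.qParam,
    ← pow_succ', ofReal_ofNat]

end QPochhammer

section GammaProduct

theorem isBigO_inv_natCast_add (a : ℂ) :
    (fun n : ℕ => ((n : ℂ) + a)⁻¹) =O[atTop] fun n => (n : ℝ)⁻¹ := by
  have h := (EisensteinSeries.linear_inv_isBigO_right 1 a).comp_tendsto
    (Nat.cast_injective (R := ℤ)).tendsto_cofinite
  rw [Nat.cofinite_eq_atTop] at h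
  simpa [Function.comp_def, add_comm] using h

theorem summable_norm_div_natCast_add_mul (c a b : ℂ) :
    Summable fun n : ℕ => ‖c / ((n + a) * (n + b))‖ := by
  refine summable_of_isBigO_nat (Real.summable_one_div_nat_pow.2 one_lt_two) ?_
  simpa only [div_eq_mul_inv, mul_inv, one_mul, sq, norm_mul] using
    (((isBigO_inv_natCast_add a).mul (isBigO_inv_natCast_add b)).const_mul_left c).norm_left

theorem natCast_add_one_add_ne_zero {u : ℂ} (hu : ∀ n : ℕ, u ≠ -n) (n : ℕ) :
    (n : ℂ) + 1 + u ≠ 0 := fun h => hu (n + 1) (by push_cast; linear_combination h)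

theorem GammaSeq_mul_GammaSeq_div_GammaSeq_add {u v : ℂ} (hu : ∀ n : ℕ, u ≠ -n)
    (hv : ∀ n : ℕ, v ≠ -n) {n : ℕ} (hn : n ≠ 0) :
    GammaSeq u n * GammaSeq v n / GammaSeq (u + v) n =
      (u + v) / (u * v) *
        ∏ j ∈ Finset.range n, (1 - u * v / (((j : ℂ) + 1 + u) * (j + 1 + v))) := by
  have hn' : (n : ℂ) ≠ 0 := Nat.cast_ne_zero.2 hn
  have hpow (z : ℂ) : (n : ℂ) ^ z ≠ 0 := by simp [cpow_eq_zero_iff, hn]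
  have hfact : (n.factorial : ℂ) ≠ 0 := Nat.cast_ne_zero.2 n.factorial_ne_zero
  have hfactor (j : ℕ) : 1 - u * v / (((j : ℂ) + 1 + u) * (j + 1 + v)) =
      (j + 1 : ℕ) * (u + v + (j + 1 : ℕ)) / ((u + (j + 1 : ℕ)) * (v + (j + 1 : ℕ))) := by
    have hju := natCast_add_one_add_ne_zero hu j
    have hjv := natCast_add_one_add_ne_zero hv j
    rw [one_sub_div (mul_ne_zero hju hjv)]
    push_cast
    congr 1 <;> ring
  simp only [hfactor, Finset.prod_div_distrib, Finset.prod_mul_distrib, ← Nat.cast_prod,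
    Finset.prod_range_add_one_eq_factorial]
  simp only [GammaSeq, Finset.prod_range_succ', Nat.cast_zero, add_zero, cpow_add _ _ hn']
  rw [div_mul_div_comm, div_div_div_eq, div_mul_div_comm]
  refine .trans ?_ (mul_div_mul_left _ _ (mul_ne_zero (mul_ne_zero (hpow u) (hpow v)) hfact))
  congr 1 <;> ring

theorem Gamma_mul_Gamma_div_Gamma_add {u v : ℂ} (hu : ∀ n : ℕ, u ≠ -n) (hv : ∀ n : ℕ, v ≠ -n)
    (huv : ∀ n : ℕ, u + v ≠ -n) :
    Gamma u * Gamma v / Gamma (u + v) =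
      (u + v) / (u * v) * ∏' n : ℕ, (1 - u * v / (((n : ℂ) + 1 + u) * (n + 1 + v))) := by
  have hprod : Multipliable fun n : ℕ => 1 - u * v / (((n : ℂ) + 1 + u) * (n + 1 + v)) := by
    have hsum := summable_norm_div_natCast_add_mul (u * v) (1 + u) (1 + v)
    simp only [← add_assoc, ← norm_neg (_ / _)] at hsum
    simpa only [sub_eq_add_neg] using multipliable_one_add_of_summable hsum
  have hseq := ((GammaSeq_tendsto_Gamma u).mul (GammaSeq_tendsto_Gamma v)).div
    (GammaSeq_tendsto_Gamma (u + v)) (Gamma_ne_zero huv)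
  refine tendsto_nhds_unique hseq ((hprod.hasProd.tendsto_prod_nat.const_mul _).congr' ?_)
  filter_upwards [eventually_ne_atTop 0] with n hn
  exact (GammaSeq_mul_GammaSeq_div_GammaSeq_add hu hv hn).symm

end GammaProduct

section QBeta

/-- The `q`-beta function `(q; q)_∞ (q^(u+v); q)_∞ / ((q^u; q)_∞ (q^v; q)_∞)` at `q = e^{-t}`,
normalised by `t` instead of the customary `1 - q`. -/
noncomputable def qBeta (t u v : ℂ) : ℂ :=
  t * (qPochhammer (cexp (-t)) (cexp (-t)) * qPochhammer (cexp (-(t * (u + v)))) (cexp (-t))) /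
    (qPochhammer (cexp (-(t * u))) (cexp (-t)) * qPochhammer (cexp (-(t * v))) (cexp (-t)))

/-- The deviation from `1` of the `n`-th factor in the hyperbolic product expansion `qBeta_eq_tprod`
of the `q`-beta function. -/
noncomputable def qBetaTerm (t u v : ℂ) (n : ℕ) : ℂ :=
  -(sinh (t * u / 2) * sinh (t * v / 2) /
    (sinh (t * (n + 1 + u) / 2) * sinh (t * (n + 1 + v) / 2)))

variable {t u v : ℂ}

theorem norm_exp_neg_lt_one (ht : 0 < t.re) : ‖cexp (-t)‖ < 1 := by
  rwa [Complex.norm_exp, Real.exp_lt_one_iff, neg_re, neg_lt_zero]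

theorem one_sub_exp_mul_one_sub_exp_eq {n : ℕ} (hu : sinh (t * (n + 1 + u) / 2) ≠ 0)
    (hv : sinh (t * (n + 1 + v) / 2) ≠ 0) :
    (1 - cexp (-(t * (n + 1)))) * (1 - cexp (-(t * (n + 1 + (u + v))))) =
      (1 - cexp (-(t * (n + 1 + u)))) * (1 - cexp (-(t * (n + 1 + v)))) *
        (1 + qBetaTerm t u v n) := by
  have hsinh := sinh_mul_sinh_add_add (t * (n + 1) / 2) (t * u / 2) (t * v / 2)
  have hexp : cexp (-(t * (n + 1) / 2)) * cexp (-(t * (n + 1 + (u + v)) / 2)) =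
      cexp (-(t * (n + 1 + u) / 2)) * cexp (-(t * (n + 1 + v) / 2)) := by
    simp only [← Complex.exp_add]
    ring_nf
  simp only [← add_div, ← mul_add, add_assoc] at hsinh hu hv hexp
  simp only [one_sub_exp_neg, qBetaTerm, add_assoc]
  rw [← sub_eq_add_neg, one_sub_div (mul_ne_zero hu hv), ← hsinh, mul_div_assoc',
    eq_div_iff (mul_ne_zero hu hv)]
  linear_combination (4 * sinh (t * (n + 1) / 2) * sinh (t * (n + (1 + (u + v))) / 2) *
    sinh (t * (n + (1 + u)) / 2) * sinh (t * (n + (1 + v)) / 2)) * hexp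

theorem exp_neg_mul_mul_exp_neg_pow (t w : ℂ) (n : ℕ) :
    cexp (-(t * w)) * cexp (-t) ^ n = cexp (-(t * (n + w))) := by
  rw [← Complex.exp_nat_mul, ← Complex.exp_add]
  ring_nf

theorem qPochhammer_exp (t w : ℂ) :
    qPochhammer (cexp (-(t * w))) (cexp (-t)) = ∏' n : ℕ, (1 - cexp (-(t * (n + w)))) := by
  simp only [qPochhammer, exp_neg_mul_mul_exp_neg_pow]

theorem qPochhammer_exp_eq_one_sub_mul (ht : 0 < t.re) (w : ℂ) :
    qPochhammer (cexp (-(t * w))) (cexp (-t)) =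
      (1 - cexp (-(t * w))) * qPochhammer (cexp (-(t * (1 + w)))) (cexp (-t)) := by
  rw [qPochhammer_eq_one_sub_mul _ (norm_exp_neg_lt_one ht), ← Complex.exp_add]
  ring_nf

theorem multipliable_one_sub_exp (ht : 0 < t.re) (w : ℂ) :
    Multipliable fun n : ℕ => 1 - cexp (-(t * (n + w))) := by
  simpa only [exp_neg_mul_mul_exp_neg_pow] using
    multipliable_one_sub_mul_pow (cexp (-(t * w))) (norm_exp_neg_lt_one ht)

theorem qPochhammer_exp_ne_zero (ht : 0 < t.re) {w : ℂ}
    (hw : ∀ n : ℕ, sinh (t * (n + w) / 2) ≠ 0) :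
    qPochhammer (cexp (-(t * w))) (cexp (-t)) ≠ 0 := by
  refine qPochhammer_ne_zero (norm_exp_neg_lt_one ht) fun n => ?_
  rw [exp_neg_mul_mul_exp_neg_pow, one_sub_exp_neg]
  exact mul_ne_zero (mul_ne_zero two_ne_zero (Complex.exp_ne_zero _)) (hw n)

theorem qPochhammer_exp_mul_eq_tprod (ht : 0 < t.re)
    (hu : ∀ n : ℕ, sinh (t * (n + 1 + u) / 2) ≠ 0) (hv : ∀ n : ℕ, sinh (t * (n + 1 + v) / 2) ≠ 0)
    (hsum : Summable fun n => ‖qBetaTerm t u v n‖) :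
    qPochhammer (cexp (-t)) (cexp (-t)) * qPochhammer (cexp (-(t * (1 + (u + v))))) (cexp (-t)) =
      qPochhammer (cexp (-(t * (1 + u)))) (cexp (-t)) *
        qPochhammer (cexp (-(t * (1 + v)))) (cexp (-t)) * ∏' n, (1 + qBetaTerm t u v n) := by
  have hq := qPochhammer_exp t 1
  rw [mul_one] at hq
  have hmul := multipliable_one_sub_exp ht
  rw [hq, qPochhammer_exp, qPochhammer_exp, qPochhammer_exp, ← (hmul _).tprod_mul (hmul _),
    ← (hmul _).tprod_mul (hmul _),
    ← ((hmul _).mul (hmul _)).tprod_mul (multipliable_one_add_of_summable hsum)]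
  refine tprod_congr fun n => ?_
  simpa only [add_assoc] using one_sub_exp_mul_one_sub_exp_eq (hu n) (hv n)

theorem qBeta_eq_tprod (ht : 0 < t.re)
    (hu : ∀ n : ℕ, sinh (t * (n + 1 + u) / 2) ≠ 0) (hv : ∀ n : ℕ, sinh (t * (n + 1 + v) / 2) ≠ 0)
    (hsum : Summable fun n => ‖qBetaTerm t u v n‖) :
    qBeta t u v = t * sinh (t * (u + v) / 2) / (2 * (sinh (t * u / 2) * sinh (t * v / 2))) *
      ∏' n, (1 + qBetaTerm t u v n) := by
  have hpu : qPochhammer (cexp (-(t * (1 + u)))) (cexp (-t)) ≠ 0 :=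
    qPochhammer_exp_ne_zero ht (by simpa only [add_assoc] using hu)
  have hpv : qPochhammer (cexp (-(t * (1 + v)))) (cexp (-t)) ≠ 0 :=
    qPochhammer_exp_ne_zero ht (by simpa only [add_assoc] using hv)
  have hexp : cexp (-(t * (u + v) / 2)) = cexp (-(t * u / 2)) * cexp (-(t * v / 2)) := by
    rw [← Complex.exp_add]
    ring_nf
  rw [qBeta, qPochhammer_exp_eq_one_sub_mul ht u, qPochhammer_exp_eq_one_sub_mul ht v,
    qPochhammer_exp_eq_one_sub_mul ht (u + v), mul_left_comm (qPochhammer (cexp (-t)) _),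
    qPochhammer_exp_mul_eq_tprod ht hu hv hsum, one_sub_exp_neg, one_sub_exp_neg, one_sub_exp_neg,
    hexp]
  field_simp

theorem tendsto_qBetaTerm {n : ℕ} (hu : (n : ℂ) + 1 + u ≠ 0) (hv : (n : ℂ) + 1 + v ≠ 0) :
    Tendsto (fun t => qBetaTerm t u v n) (𝓝[≠] 0)
      (𝓝 (-(u * v / (((n : ℂ) + 1 + u) * (n + 1 + v))))) := by
  have hlim := (((tendsto_sinh_mul_div u).mul (tendsto_sinh_mul_div v)).div
    ((tendsto_sinh_mul_div (n + 1 + u)).mul (tendsto_sinh_mul_div (n + 1 + v)))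
    (mul_ne_zero (div_ne_zero hu two_ne_zero) (div_ne_zero hv two_ne_zero))).neg
  rw [div_mul_div_comm, div_mul_div_comm, div_div_div_cancel_right₀ (by norm_num)] at hlim
  refine hlim.congr' ?_
  filter_upwards [self_mem_nhdsWithin] with t (ht : t ≠ 0)
  rw [qBetaTerm, Pi.div_apply, div_mul_div_comm, div_mul_div_comm,
    div_div_div_cancel_right₀ (mul_ne_zero ht ht)]

theorem tendsto_mul_sinh_div_sinh_mul_sinh (hu : u ≠ 0) (hv : v ≠ 0) :
    Tendsto (fun t => t * sinh (t * (u + v) / 2) / (2 * (sinh (t * u / 2) * sinh (t * v / 2))))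
      (𝓝[≠] 0) (𝓝 ((u + v) / (u * v))) := by
  have hlim := (tendsto_sinh_mul_div (u + v)).div
    (((tendsto_sinh_mul_div u).mul (tendsto_sinh_mul_div v)).const_mul 2)
    (mul_ne_zero two_ne_zero
      (mul_ne_zero (div_ne_zero hu two_ne_zero) (div_ne_zero hv two_ne_zero)))
  have hval : (u + v) / 2 / (2 * (u / 2 * (v / 2))) = (u + v) / (u * v) := by field_simp
  rw [hval] at hlim
  refine hlim.congr' ?_
  filter_upwards [self_mem_nhdsWithin] with t (ht : t ≠ 0)
  simp only [Pi.div_apply]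
  field_simp

theorem mul_norm_div_pi_le_norm_sinh {t : ℝ} (ht : 0 < t) (hu : t * ‖u‖ ≤ 2) (x : ℝ) :
    t * ‖(x : ℂ) + u‖ / Real.pi ≤ ‖sinh (t * (x + u) / 2)‖ := by
  have him : ((t : ℂ) * (x + u) / 2).im = t * u.im / 2 := by simp
  have hjordan : |((t : ℂ) * (x + u) / 2).im| ≤ Real.pi / 2 := by
    rw [him, abs_div, abs_mul, abs_of_pos ht, abs_two]
    gcongr
    calc t * |u.im| ≤ t * ‖u‖ := by gcongr; exact abs_im_le_norm u
      _ ≤ Real.pi := hu.trans Real.two_le_pi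
  refine le_of_eq_of_le ?_ (two_div_pi_mul_norm_le_norm_sinh hjordan)
  rw [norm_div, norm_mul, norm_real, Real.norm_of_nonneg ht.le, Complex.norm_two]
  field_simp

theorem sinh_mul_natCast_add_one_add_ne_zero {t : ℝ} (ht : 0 < t) (hu : t * ‖u‖ ≤ 2)
    (hne : ∀ n : ℕ, u ≠ -n) (n : ℕ) : sinh (t * (n + 1 + u) / 2) ≠ 0 := by
  have hle := mul_norm_div_pi_le_norm_sinh ht hu (n + 1)
  have hpos : 0 < ‖(n : ℂ) + 1 + u‖ := norm_pos_iff.2 (natCast_add_one_add_ne_zero hne n)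
  push_cast at hle
  exact norm_pos_iff.1 (lt_of_lt_of_le (by positivity) hle)

theorem norm_sinh_mul_div_two_le {t : ℝ} (ht : 0 < t) (hu : t * ‖u‖ ≤ 2) :
    ‖sinh (t * u / 2)‖ ≤ t * ‖u‖ := by
  have hnorm : ‖(t : ℂ) * u / 2‖ = t * ‖u‖ / 2 := by
    rw [norm_div, norm_mul, norm_real, Real.norm_of_nonneg ht.le, Complex.norm_two]
  refine (norm_sinh_le (by rw [hnorm]; linarith)).trans_eq ?_
  rw [hnorm]
  ring

theorem norm_qBetaTerm_le {t : ℝ} (ht : 0 < t) (htu : t * ‖u‖ ≤ 2) (htv : t * ‖v‖ ≤ 2)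
    (hu : ∀ n : ℕ, u ≠ -n) (hv : ∀ n : ℕ, v ≠ -n) (n : ℕ) :
    ‖qBetaTerm t u v n‖ ≤
      ‖(Real.pi ^ 2 * (u * v) : ℂ) / ((n + (1 + u)) * (n + (1 + v)))‖ := by
  have hnu : 0 < ‖(n : ℂ) + 1 + u‖ := norm_pos_iff.2 (natCast_add_one_add_ne_zero hu n)
  have hnv : 0 < ‖(n : ℂ) + 1 + v‖ := norm_pos_iff.2 (natCast_add_one_add_ne_zero hv n)
  have hle (w : ℂ) (htw : t * ‖w‖ ≤ 2) :
      t * ‖(n : ℂ) + 1 + w‖ / Real.pi ≤ ‖sinh (t * (n + 1 + w) / 2)‖ := by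
    simpa using mul_norm_div_pi_le_norm_sinh ht htw (n + 1)
  calc ‖qBetaTerm t u v n‖ = ‖sinh (t * u / 2)‖ * ‖sinh (t * v / 2)‖ /
        (‖sinh (t * (n + 1 + u) / 2)‖ * ‖sinh (t * (n + 1 + v) / 2)‖) := by
        rw [qBetaTerm, norm_neg, norm_div, norm_mul, norm_mul]
    _ ≤ t * ‖u‖ * (t * ‖v‖) /
        (t * ‖(n : ℂ) + 1 + u‖ / Real.pi * (t * ‖(n : ℂ) + 1 + v‖ / Real.pi)) := by
        gcongr
        exacts [norm_sinh_mul_div_two_le ht htu, norm_sinh_mul_div_two_le ht htv,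
          hle u htu, hle v htv]
    _ = ‖(Real.pi ^ 2 * (u * v) : ℂ) / ((n + (1 + u)) * (n + (1 + v)))‖ := by
        simp only [norm_div, norm_mul, norm_pow, norm_real, Real.norm_of_nonneg Real.pi_nonneg,
          ← add_assoc]
        field_simp

theorem eventually_mul_norm_le_two (u : ℂ) : ∀ᶠ t : ℝ in 𝓝[>] 0, t * ‖u‖ ≤ 2 := by
  have hcont : Tendsto (fun t : ℝ => t * ‖u‖) (𝓝[>] 0) (𝓝 (0 * ‖u‖)) :=
    tendsto_nhdsWithin_of_tendsto_nhds (tendsto_id.mul_const _)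
  rw [zero_mul] at hcont
  exact hcont.eventually_le_const two_pos

theorem tendsto_qBeta (hu : ∀ n : ℕ, u ≠ -n) (hv : ∀ n : ℕ, v ≠ -n) (huv : ∀ n : ℕ, u + v ≠ -n) :
    Tendsto (fun t : ℝ => qBeta t u v) (𝓝[>] 0) (𝓝 (Gamma u * Gamma v / Gamma (u + v))) := by
  have hofReal : Tendsto ofReal (𝓝[>] 0) (𝓝[≠] (0 : ℂ)) :=
    tendsto_nhdsWithin_iff.2 ⟨tendsto_nhdsWithin_of_tendsto_nhds (continuous_ofReal.tendsto 0),
      eventually_mem_nhdsWithin.mono fun _ ht => ofReal_ne_zero.2 (ne_of_gt ht)⟩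
  have hu0 : u ≠ 0 := by simpa using hu 0
  have hv0 : v ≠ 0 := by simpa using hv 0
  have hbound := summable_norm_div_natCast_add_mul (Real.pi ^ 2 * (u * v)) (1 + u) (1 + v)
  have hsmall : ∀ᶠ t : ℝ in 𝓝[>] 0, 0 < t ∧ t * ‖u‖ ≤ 2 ∧ t * ‖v‖ ≤ 2 :=
    eventually_mem_nhdsWithin.and
      ((eventually_mul_norm_le_two u).and (eventually_mul_norm_le_two v))
  have hprod := tendsto_tprod_one_add_of_dominated_convergence hbound
    (fun n => (tendsto_qBetaTerm (natCast_add_one_add_ne_zero hu n)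
      (natCast_add_one_add_ne_zero hv n)).comp hofReal)
    (hsmall.mono fun t ⟨ht, htu, htv⟩ => norm_qBetaTerm_le ht htu htv hu hv)
  have hlim := ((tendsto_mul_sinh_div_sinh_mul_sinh hu0 hv0).comp hofReal).mul hprod
  simp only [← sub_eq_add_neg] at hlim
  rw [← Gamma_mul_Gamma_div_Gamma_add hu hv huv] at hlim
  refine hlim.congr' (hsmall.mono fun t ⟨ht, htu, htv⟩ => (qBeta_eq_tprod (by simpa using ht)
    (sinh_mul_natCast_add_one_add_ne_zero ht htu hu)
    (sinh_mul_natCast_add_one_add_ne_zero ht htv hv) ?_).symm)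
  exact hbound.of_nonneg_of_le (fun _ => norm_nonneg _) (norm_qBetaTerm_le ht htu htv hu hv)

end QBeta

section QuantumDilogarithm

/-- The nome `q̃ = e^{-2πi b⁻²}` of the numerator product of `Gb`, the modular image of the nome
`q = e^{2πi b²}` of its denominator product. -/
noncomputable def dualNome (b : ℂ) : ℂ :=
  cexp (-(2 * Real.pi * I * (b ^ 2)⁻¹))

variable {b : ℂ}

theorem Gb_eq_qPochhammer (b x : ℂ) :
    Gb b x = zetaBar b * qPochhammer (cexp (2 * Real.pi * I * b⁻¹ * x) * dualNome b) (dualNome b) /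
      qPochhammer (cexp (2 * Real.pi * I * b * x)) (cexp (2 * Real.pi * I * b ^ 2)) := by
  simp only [Gb, qPochhammer, dualNome, ← Complex.exp_nat_mul, ← Complex.exp_add, ← inv_pow]
  congr 3 <;> ext n <;> congr 2 <;> ring

-- The double negations exhibit the parameter `t = -2πi b²` of `qBeta`.
theorem Gb_I_mul_mul (hb : b ≠ 0) (s : ℂ) :
    Gb b (I * b * s) =
      zetaBar b * qPochhammer (cexp (-(2 * Real.pi * s)) * dualNome b) (dualNome b) /
        qPochhammer (cexp (-(-(2 * Real.pi * I * b ^ 2) * (I * s))))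
          (cexp (-(-(2 * Real.pi * I * b ^ 2)))) := by
  have hdual : 2 * Real.pi * I * b⁻¹ * (I * b * s) = -(2 * Real.pi * s) := by
    field_simp
    linear_combination s * I_sq
  rw [Gb_eq_qPochhammer, hdual, neg_neg]
  ring_nf

theorem exp_pi_mul_I_div_four_sq : cexp (Real.pi * I / 4) ^ 2 = I := by
  rw [← Complex.exp_nat_mul]
  convert exp_pi_div_two_mul_I using 2
  push_cast
  ring

theorem exp_pi_mul_I_div_four_re_pos : 0 < (cexp (Real.pi * I / 4)).re := by
  have him : (Real.pi * I / 4 : ℂ).im = Real.pi / 4 := by simp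
  rw [exp_re, him]
  have hpi := Real.pi_pos
  exact mul_pos (Real.exp_pos _) (Real.cos_pos_of_mem_Ioo ⟨by linarith, by linarith⟩)

theorem zetaBar_mul_qPochhammer_dualNome (hre : 0 < b.re) (him : 0 < (b ^ 2).im) :
    zetaBar b * qPochhammer (dualNome b) (dualNome b) =
      -I * b * qPochhammer (cexp (2 * Real.pi * I * b ^ 2)) (cexp (2 * Real.pi * I * b ^ 2)) := by
  have hmodular := ModularForm.eta_comp_eq_csqrt_I_inv him
  have hsqrtI : Complex.sqrt I = cexp (Real.pi * I / 4) := by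
    rw [← sq_cpow_two_inv exp_pi_mul_I_div_four_re_pos, exp_pi_mul_I_div_four_sq, Complex.sqrt]
  have hsqrt : Complex.sqrt (b ^ 2) = b := sq_cpow_two_inv hre
  have hnome : cexp (2 * Real.pi * I * (-1 / b ^ 2)) = dualNome b := by
    rw [dualNome]
    ring_nf
  have hI : cexp (-(Real.pi * I) / 4) * (cexp (Real.pi * I / 4))⁻¹ = -I := by
    rw [← Complex.exp_neg, ← Complex.exp_add, ← exp_neg_pi_div_two_mul_I]
    ring_nf
  simp only [Function.comp_apply, Pi.smul_apply, Pi.mul_apply, smul_eq_mul, eta_eq_qPochhammer,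
    hnome, hsqrtI, hsqrt] at hmodular
  have hzeta : zetaBar b = cexp (-(Real.pi * I) / 4) * (cexp (2 * Real.pi * I * b ^ 2 / 24))⁻¹ *
      cexp (2 * Real.pi * I * (-1 / b ^ 2) / 24) := by
    rw [zetaBar, ← Complex.exp_neg, ← Complex.exp_add, ← Complex.exp_add]
    ring_nf
  rw [hzeta, mul_assoc, hmodular, ← hI]
  field_simp

theorem qPochhammer_dualNome_ne_zero (hre : 0 < b.re) (him : 0 < (b ^ 2).im) :
    qPochhammer (dualNome b) (dualNome b) ≠ 0 := by
  have heta := ModularForm.eta_ne_zero him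
  have hb : b ≠ 0 := fun h => by simp [h] at hre
  rw [eta_eq_qPochhammer] at heta
  refine right_ne_zero_of_mul (a := zetaBar b) ?_
  rw [zetaBar_mul_qPochhammer_dualNome hre him]
  exact mul_ne_zero (mul_ne_zero (neg_ne_zero.2 I_ne_zero) hb) (right_ne_zero_of_mul heta)

theorem mul_Gb_mul_Gb_div_Gb (hre : 0 < b.re) (him : 0 < (b ^ 2).im) (u v : ℂ) :
    b * Gb b (I * b * u) * Gb b (I * b * v) / Gb b (I * b * (u + v)) =
      1 / (2 * Real.pi) * qBeta (-(2 * Real.pi * I * b ^ 2)) (I * u) (I * v) *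
        (qPochhammer (cexp (-(2 * Real.pi * u)) * dualNome b) (dualNome b) *
            qPochhammer (cexp (-(2 * Real.pi * v)) * dualNome b) (dualNome b) /
          (qPochhammer (cexp (-(2 * Real.pi * (u + v))) * dualNome b) (dualNome b) *
            qPochhammer (dualNome b) (dualNome b))) := by
  have hb : b ≠ 0 := fun h => by simp [h] at hre
  have hz : zetaBar b ≠ 0 := Complex.exp_ne_zero _
  have hdual := qPochhammer_dualNome_ne_zero hre him
  have hbz : b * zetaBar b = -(2 * Real.pi * I * b ^ 2) / (2 * Real.pi) *
      (qPochhammer (cexp (2 * Real.pi * I * b ^ 2)) (cexp (2 * Real.pi * I * b ^ 2)) /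
        qPochhammer (dualNome b) (dualNome b)) := by
    rw [eq_div_of_mul_eq hdual (zetaBar_mul_qPochhammer_dualNome hre him)]
    field_simp
  have hcancel (x y : ℂ) : b * (zetaBar b * x) * (zetaBar b * y) / zetaBar b =
      b * zetaBar b * x * y := by
    field_simp
  simp only [Gb_I_mul_mul hb, qBeta, ← mul_add, neg_neg, mul_div_assoc (zetaBar b)]
  rw [← div_div, hcancel, hbz]
  simp only [div_eq_mul_inv, mul_inv, inv_inv, one_mul]
  ring

end QuantumDilogarithm

section ClassicalLimit

variable {r : ℝ}

theorem br_sq (hr : 0 ≤ r) : br r ^ 2 = r * I := by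
  rw [br, mul_pow, exp_pi_mul_I_div_four_sq, ← ofReal_pow, Real.sq_sqrt hr, mul_comm]

theorem br_re_pos (hr : 0 < r) : 0 < (br r).re := by
  rw [br, re_mul_ofReal]
  exact mul_pos exp_pi_mul_I_div_four_re_pos (Real.sqrt_pos.2 hr)

theorem br_sq_im_pos (hr : 0 < r) : 0 < (br r ^ 2).im := by
  simpa [br_sq hr.le] using hr

theorem dualNome_br (hr : 0 ≤ r) : dualNome (br r) = Real.exp (-(2 * Real.pi * r⁻¹)) := by
  rw [dualNome, br_sq hr, mul_inv, inv_I]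
  push_cast
  congr 1
  linear_combination (2 * Real.pi * (r : ℂ)⁻¹) * I_sq

theorem tendsto_dualNome_br : Tendsto (fun r => dualNome (br r)) (𝓝[>] 0) (𝓝 0) := by
  have hexp : Tendsto (fun r : ℝ => Real.exp (-(2 * Real.pi * r⁻¹))) (𝓝[>] 0) (𝓝 0) :=
    Real.tendsto_exp_neg_atTop_nhds_zero.comp
      (tendsto_inv_nhdsGT_zero.const_mul_atTop Real.two_pi_pos)
  refine ((continuous_ofReal.tendsto 0).comp hexp).congr' ?_
  filter_upwards [self_mem_nhdsWithin] with r hr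
  exact (dualNome_br (le_of_lt hr)).symm

theorem tendsto_qPochhammer_dualNome_br (a : ℂ) :
    Tendsto (fun r => qPochhammer (a * dualNome (br r)) (dualNome (br r))) (𝓝[>] 0) (𝓝 1) :=
  (tendsto_qPochhammer_mul_self a).comp tendsto_dualNome_br

theorem tendsto_br_mul_Gb_mul_Gb_div_Gb {u v : ℂ} (hu : ∀ n : ℕ, I * u ≠ -n)
    (hv : ∀ n : ℕ, I * v ≠ -n) (huv : ∀ n : ℕ, I * (u + v) ≠ -n) :
    Tendsto
      (fun r : ℝ =>
        br r * Gb (br r) (I * br r * u) * Gb (br r) (I * br r * v) / Gb (br r) (I * br r * (u + v)))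
      (𝓝[>] 0)
      (𝓝 (1 / (2 * Real.pi) * (Gamma (I * u) * Gamma (I * v) / Gamma (I * (u + v))))) := by
  have hscale : Tendsto (fun r : ℝ => 2 * Real.pi * r) (𝓝[>] 0) (𝓝[>] 0) := by
    have hcont : Tendsto (fun r : ℝ => 2 * Real.pi * r) (𝓝[>] 0) (𝓝 (2 * Real.pi * 0)) :=
      tendsto_nhdsWithin_of_tendsto_nhds (tendsto_id.const_mul _)
    rw [mul_zero] at hcont
    exact tendsto_nhdsWithin_iff.2
      ⟨hcont, eventually_mem_nhdsWithin.mono fun _ hr => mul_pos Real.two_pi_pos hr⟩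
  have hbeta := ((tendsto_qBeta hu hv (by simpa only [← mul_add] using huv)).comp hscale).const_mul
    (1 / (2 * Real.pi) : ℂ)
  have hself : Tendsto (fun r => qPochhammer (dualNome (br r)) (dualNome (br r)))
      (𝓝[>] 0) (𝓝 1) := by
    simpa only [one_mul] using tendsto_qPochhammer_dualNome_br 1
  have hdual (s : ℂ) := tendsto_qPochhammer_dualNome_br (cexp (-(2 * Real.pi * s)))
  have hlim := hbeta.mul (((hdual u).mul (hdual v)).div ((hdual (u + v)).mul hself) (by simp))
  rw [mul_one, div_one, mul_one, ← mul_add] at hlim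
  refine hlim.congr' ?_
  filter_upwards [self_mem_nhdsWithin] with r hr
  have hnome : -(2 * Real.pi * I * br r ^ 2) = (2 * Real.pi * r : ℝ) := by
    rw [br_sq (le_of_lt hr)]
    push_cast
    linear_combination (-(2 * Real.pi * r) : ℂ) * I_sq
  rw [mul_Gb_mul_Gb_div_Gb (br_re_pos hr) (br_sq_im_pos hr) u v, hnome]
  rfl

theorem I_mul_ofReal_ne_neg_natCast {x : ℝ} (hx : x ≠ 0) (n : ℕ) : I * x ≠ -n := fun h =>
  hx (by simpa using congrArg im h)

end ClassicalLimit

theorem stmt9_general (l t1 t2 : ℂ) (h1 : ∀ n : ℕ, I * (t1 - l) ≠ -n)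
    (h2 : ∀ n : ℕ, I * (t2 + l) ≠ -n) (h3 : ∀ n : ℕ, I * (t1 + t2) ≠ -n) :
    Tendsto
      (fun r : ℝ =>
        br r * cexp (Real.pi * I * (br r) ^ 2 * l * (l + 2 * t2)) *
            cexp (-(2 * Real.pi * I * (br r) ^ 2 * t1 * t2)) *
            Gb (br r) (I * br r * (t1 - l)) * Gb (br r) (I * br r * (t2 + l)) /
          Gb (br r) (I * br r * (t1 + t2)))
      (𝓝[>] 0)
      (𝓝 (1 / (2 * Real.pi) * Gamma (I * (t1 - l)) * Gamma (I * (t2 + l)) /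
          Gamma (I * (t1 + t2)))) := by
  have hsum : t1 - l + (t2 + l) = t1 + t2 := by ring
  have hkernel := tendsto_br_mul_Gb_mul_Gb_div_Gb h1 h2 (by simpa only [hsum] using h3)
  have hphase : Tendsto (fun r : ℝ => cexp (Real.pi * I * (r * I) * l * (l + 2 * t2)) *
      cexp (-(2 * Real.pi * I * (r * I) * t1 * t2))) (𝓝[>] 0) (𝓝 1) := by
    have hcont : Continuous fun r : ℝ => cexp (Real.pi * I * (r * I) * l * (l + 2 * t2)) *
        cexp (-(2 * Real.pi * I * (r * I) * t1 * t2)) := by fun_prop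
    simpa using (hcont.tendsto 0).mono_left nhdsWithin_le_nhds
  have hlim := hphase.mul hkernel
  rw [hsum, one_mul, ← mul_div_assoc, ← mul_assoc] at hlim
  refine hlim.congr' ?_
  filter_upwards [self_mem_nhdsWithin] with r hr
  rw [br_sq (le_of_lt hr)]
  ring

/-- Classical limit of the rescaled inverse quantum intertwining kernel
`b²·𝓕⌈bλ, bt; bt₁, bt₂⌉_*` (delta factor removed): for real `λ, t₁, t₂` with
`λ ≠ t₁`, `λ ≠ −t₂`, `t₁ + t₂ ≠ 0`,
`lim_{r→0⁺} b(r) e^{πi b(r)² λ(λ+2t₂)} e^{−2πi b(r)² t₁t₂} G_{b(r)}(ib(r)(t₁−λ)) G_{b(r)}(ib(r)(t₂+λ)) / G_{b(r)}(ib(r)(t₁+t₂))`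
`= (1/2π) Γ(i(t₁−λ)) Γ(i(t₂+λ)) / Γ(i(t₁+t₂))`. -/
theorem stmt9 (l t1 t2 : ℝ) (h1 : l ≠ t1) (h2 : l ≠ -t2) (h3 : t1 + t2 ≠ 0) :
    Tendsto
      (fun r : ℝ =>
        br r * Complex.exp ((Real.pi : ℂ) * Complex.I * (br r) ^ 2 * l * (l + 2 * t2)) *
            Complex.exp (-(2 * (Real.pi : ℂ) * Complex.I * (br r) ^ 2 * t1 * t2)) *
            Gb (br r) (Complex.I * br r * ((t1 : ℂ) - l)) *
            Gb (br r) (Complex.I * br r * ((t2 : ℂ) + l)) /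
          Gb (br r) (Complex.I * br r * ((t1 : ℂ) + t2)))
      (𝓝[>] (0 : ℝ))
      (𝓝 (1 / (2 * (Real.pi : ℂ)) * Complex.Gamma (Complex.I * ((t1 : ℂ) - l)) *
          Complex.Gamma (Complex.I * ((t2 : ℂ) + l)) /
          Complex.Gamma (Complex.I * ((t1 : ℂ) + t2)))) :=
  stmt9_general l t1 t2
    (mod_cast I_mul_ofReal_ne_neg_natCast (sub_ne_zero.2 h1.symm))
    (mod_cast I_mul_ofReal_ne_neg_natCast (mt eq_neg_of_add_eq_zero_right h2))
    (mod_cast I_mul_ofReal_ne_neg_natCast h3)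
end

section
/- Let a ∈ ℂ with Re(a) > 0, let c ∈ ℝ with 0 < c < Re(a), and let x > 0 be real. Then (1/2π) ∫_{−∞}^{∞} Γ(c + iτ) Γ(a − c − iτ) x^{−c−iτ} dτ = Γ(a) (1 + x)^{−a}, where the integral converges absolutely and all complex powers are principal. -/
open Complex MeasureTheory

/-!
The substitution `u = x / (1 + x)` turns the Beta integral into a Mellin transform, so that
`x ↦ Γ(a) (1 + x)^(-a)` has Mellin transform `s ↦ Γ(s) Γ(a - s)` on the strip `0 < Re s < Re a`.
The formula is Mellin inversion on the line `Re s = c`. Inversion requires `Γ(s) Γ(a - s)` to be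
integrable along that line; no Stirling asymptotics are needed for this, since `Γ(a - s)` is bounded
there and the functional equation gives `Γ(s) = Γ(s + 2) / (s (s + 1)) = O(|s|⁻²)`.
-/

section GammaVertical

theorem norm_Gamma_le_Gamma_re {s : ℂ} (hs : 0 < s.re) : ‖Complex.Gamma s‖ ≤ Real.Gamma s.re := by
  rw [Gamma_eq_integral hs, GammaIntegral, Real.Gamma_eq_integral hs]
  refine (norm_integral_le_integral_norm _).trans_eq
    (setIntegral_congr_fun measurableSet_Ioi fun t ht ↦ ?_)
  rw [norm_mul, Complex.norm_of_nonneg (Real.exp_pos _).le, norm_cpow_eq_rpow_re_of_pos ht,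
    sub_re, one_re]

theorem norm_le_norm_add_one_of_re_nonneg {s : ℂ} (hs : 0 ≤ s.re) : ‖s‖ ≤ ‖s + 1‖ := by
  rw [norm_def, norm_def]
  refine Real.sqrt_le_sqrt ?_
  simp only [normSq_apply, add_re, one_re, add_im, one_im]
  nlinarith

theorem norm_Gamma_le_Gamma_re_add_div_norm_pow (n : ℕ) {s : ℂ} (hs : 0 < s.re) :
    ‖Complex.Gamma s‖ ≤ Real.Gamma (s.re + n) / ‖s‖ ^ n := by
  induction n generalizing s with
  | zero => simpa using norm_Gamma_le_Gamma_re hs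
  | succ n ih =>
    have hs0 : s ≠ 0 := fun h ↦ hs.ne' (congrArg re h)
    have hs1 : 0 < (s + 1).re := by simpa using hs.trans (lt_add_one s.re)
    have : 0 ≤ Real.Gamma ((s + 1).re + n) := Real.Gamma_nonneg_of_nonneg (by positivity)
    calc ‖Complex.Gamma s‖ = ‖Complex.Gamma (s + 1)‖ / ‖s‖ := by
          rw [Gamma_add_one s hs0, norm_mul, mul_div_cancel_left₀ _ (norm_ne_zero_iff.2 hs0)]
      _ ≤ Real.Gamma ((s + 1).re + n) / ‖s + 1‖ ^ n / ‖s‖ := by gcongr; exact ih hs1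
      _ ≤ Real.Gamma ((s + 1).re + n) / ‖s‖ ^ n / ‖s‖ := by
          gcongr; exact norm_le_norm_add_one_of_re_nonneg hs.le
      _ = Real.Gamma (s.re + (n + 1 : ℕ)) / ‖s‖ ^ (n + 1) := by
          rw [div_div, ← pow_succ, add_re, one_re, add_assoc, Nat.cast_succ, add_comm 1 (n : ℝ)]

theorem continuousOn_Gamma_re_pos : ContinuousOn Complex.Gamma {s | 0 < s.re} := by
  refine fun s hs ↦ (continuousAt_Gamma s fun m hm ↦ ?_).continuousWithinAt
  have hre : s.re = -m := by simpa using congrArg re hm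
  exact (hre ▸ hs : (0 : ℝ) < -m).not_ge (by simp)

theorem integrable_inv_norm_add_mul_I_sq {c : ℝ} (hc : c ≠ 0) :
    Integrable fun τ : ℝ ↦ (‖(c : ℂ) + τ * I‖ ^ 2)⁻¹ := by
  refine ((integrable_inv_one_add_sq.comp_div hc).const_mul (c ^ 2)⁻¹).congr (.of_forall fun τ ↦ ?_)
  simp only [norm_add_mul_I]
  rw [Real.sq_sqrt (by positivity), ← mul_inv]
  congr 1
  field_simp

theorem verticalIntegrable_Gamma {c : ℝ} (hc : 0 < c) : VerticalIntegrable Complex.Gamma c := by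
  have hcont : Continuous fun τ : ℝ ↦ Complex.Gamma (c + τ * I) :=
    continuousOn_Gamma_re_pos.comp_continuous (by fun_prop) fun τ ↦ by simpa using hc
  refine ((integrable_inv_norm_add_mul_I_sq hc.ne').const_mul (Real.Gamma (c + 2))).mono'
    hcont.aestronglyMeasurable (.of_forall fun τ ↦ ?_)
  simpa [div_eq_mul_inv] using
    norm_Gamma_le_Gamma_re_add_div_norm_pow 2 (s := c + τ * I) (by simpa using hc)

theorem verticalIntegrable_Gamma_mul_Gamma_sub {a : ℂ} {c : ℝ} (hc : 0 < c) (hca : c < a.re) :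
    VerticalIntegrable (fun s ↦ Complex.Gamma s * Complex.Gamma (a - s)) c := by
  have hre (τ : ℝ) : 0 < (a - (c + τ * I)).re := by simpa using hca
  have hcont : Continuous fun τ : ℝ ↦ Complex.Gamma (a - (c + τ * I)) :=
    continuousOn_Gamma_re_pos.comp_continuous (by fun_prop) hre
  refine (verticalIntegrable_Gamma hc).mul_bdd (c := Real.Gamma (a.re - c))
    hcont.aestronglyMeasurable (.of_forall fun τ ↦ ?_)
  simpa using norm_Gamma_le_Gamma_re (hre τ)

end GammaVertical

theorem verticalIntegrable_cpow_neg_smul {E : Type*} [NormedAddCommGroup E] [NormedSpace ℂ E]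
    {f : ℂ → E} {σ x : ℝ} (hf : VerticalIntegrable f σ) (hx : 0 < x) :
    VerticalIntegrable (fun s ↦ (x : ℂ) ^ (-s) • f s) σ := by
  have hcont : Continuous fun τ : ℝ ↦ (x : ℂ) ^ (-((σ : ℂ) + τ * I)) :=
    Continuous.const_cpow (by fun_prop) (.inl (ofReal_ne_zero.2 hx.ne'))
  refine Integrable.bdd_smul hf (x ^ (-σ)) hcont.aestronglyMeasurable (.of_forall fun τ ↦ ?_)
  simp [norm_cpow_eq_rpow_re_of_pos hx]

section ChangeOfVariables

open Set

theorem bijOn_div_one_add_Ioi_Ioo : BijOn (fun x : ℝ ↦ x / (1 + x)) (Ioi 0) (Ioo 0 1) := by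
  refine InvOn.bijOn (f' := fun u ↦ u / (1 - u)) ⟨fun x hx ↦ ?_, fun u hu ↦ ?_⟩
    (fun x hx ↦ ?_) fun u hu ↦ div_pos hu.1 (sub_pos.2 hu.2)
  · have : 0 < 1 + x := add_pos one_pos hx
    simp only
    field_simp
    simp
  · have : 0 < 1 - u := sub_pos.2 hu.2
    simp only
    field_simp
    simp
  · have hx1 : 0 < 1 + x := add_pos one_pos hx
    exact ⟨div_pos hx hx1, (div_lt_one hx1).2 (lt_one_add x)⟩

theorem hasDerivAt_div_one_add {x : ℝ} (hx : 1 + x ≠ 0) :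
    HasDerivAt (fun x : ℝ ↦ x / (1 + x)) ((1 + x) ^ 2)⁻¹ x := by
  refine ((hasDerivAt_id' x).fun_div ((hasDerivAt_id' x).const_add 1) hx).congr_deriv ?_
  ring

variable {E : Type*} [NormedAddCommGroup E] [NormedSpace ℝ E]

theorem intervalIntegrable_iff_integrableOn_comp_div_one_add (g : ℝ → E) :
    IntervalIntegrable g volume 0 1 ↔
      IntegrableOn (fun x : ℝ ↦ ((1 + x) ^ 2)⁻¹ • g (x / (1 + x))) (Ioi 0) := by
  rw [intervalIntegrable_iff_integrableOn_Ioo_of_le zero_le_one,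
    ← bijOn_div_one_add_Ioi_Ioo.image_eq,
    integrableOn_image_iff_integrableOn_abs_deriv_smul measurableSet_Ioi
      (fun x hx ↦ (hasDerivAt_div_one_add (add_pos one_pos hx).ne').hasDerivWithinAt)
      bijOn_div_one_add_Ioi_Ioo.injOn]
  simp only [abs_inv, abs_sq]

theorem intervalIntegral_eq_integral_comp_div_one_add (g : ℝ → E) :
    ∫ u in (0 : ℝ)..1, g u = ∫ x in Ioi (0 : ℝ), ((1 + x) ^ 2)⁻¹ • g (x / (1 + x)) := by
  rw [intervalIntegral.integral_of_le zero_le_one, integral_Ioc_eq_integral_Ioo,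
    ← bijOn_div_one_add_Ioi_Ioo.image_eq,
    integral_image_eq_integral_abs_deriv_smul measurableSet_Ioi
      (fun x hx ↦ (hasDerivAt_div_one_add (add_pos one_pos hx).ne').hasDerivWithinAt)
      bijOn_div_one_add_Ioi_Ioo.injOn]
  simp only [abs_inv, abs_sq]

end ChangeOfVariables

section BetaMellin

theorem ofReal_inv_cpow {y : ℝ} (hy : 0 ≤ y) (w : ℂ) :
    ((y⁻¹ : ℝ) : ℂ) ^ w = (y : ℂ) ^ (-w) := by
  rw [ofReal_inv, inv_cpow _ _ (by simpa [arg_ofReal_of_nonneg hy] using Real.pi_ne_zero.symm),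
    cpow_neg]

theorem betaIntegrand_comp_div_one_add (u v : ℂ) {x : ℝ} (hx : 0 < x) :
    ((1 + x) ^ 2)⁻¹ • (((x / (1 + x) : ℝ) : ℂ) ^ (u - 1) *
        (1 - ((x / (1 + x) : ℝ) : ℂ)) ^ (v - 1)) =
      (x : ℂ) ^ (u - 1) • ((1 + x : ℝ) : ℂ) ^ (-(u + v)) := by
  have hy : 0 < 1 + x := by positivity
  have hy0 : ((1 + x : ℝ) : ℂ) ≠ 0 := ofReal_ne_zero.2 hy.ne'
  have hsub : 1 - ((x / (1 + x) : ℝ) : ℂ) = (((1 + x)⁻¹ : ℝ) : ℂ) := by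
    rw [← ofReal_one, ← ofReal_sub]
    congr 1
    field_simp
    simp
  have hjac : ((((1 + x) ^ 2)⁻¹ : ℝ) : ℂ) = ((1 + x : ℝ) : ℂ) ^ (-2 : ℂ) := by
    rw [cpow_neg, cpow_ofNat, ofReal_inv, ofReal_pow]
  have hexp : -(u + v) = -2 + -(u - 1) + -(v - 1) := by ring
  rw [hsub, div_eq_mul_inv, ofReal_mul, mul_cpow_ofReal_nonneg hx.le (inv_pos.2 hy).le,
    ofReal_inv_cpow hy.le, ofReal_inv_cpow hy.le, real_smul, hjac, smul_eq_mul, hexp,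
    cpow_add _ _ hy0, cpow_add _ _ hy0]
  ring

theorem hasMellin_one_add_cpow_neg_betaIntegral {u v : ℂ} (hu : 0 < u.re) (hv : 0 < v.re) :
    HasMellin (fun x : ℝ ↦ ((1 + x : ℝ) : ℂ) ^ (-(u + v))) u (betaIntegral u v) := by
  constructor
  · exact ((intervalIntegrable_iff_integrableOn_comp_div_one_add _).1
      (betaIntegral_convergent hu hv)).congr_fun
        (fun x hx ↦ betaIntegrand_comp_div_one_add u v hx) measurableSet_Ioi
  · rw [betaIntegral, intervalIntegral_eq_integral_comp_div_one_add, mellin]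
    exact (setIntegral_congr_fun measurableSet_Ioi
      fun x hx ↦ betaIntegrand_comp_div_one_add u v hx).symm

theorem hasMellin_Gamma_mul_one_add_cpow_neg {a s : ℂ} (hs : 0 < s.re) (hsa : s.re < a.re) :
    HasMellin (fun x : ℝ ↦ Complex.Gamma a * ((1 + x : ℝ) : ℂ) ^ (-a)) s
      (Complex.Gamma s * Complex.Gamma (a - s)) := by
  have has : 0 < (a - s).re := by simpa using hsa
  have hbeta := hasMellin_one_add_cpow_neg_betaIntegral hs has
  rw [Gamma_mul_Gamma_eq_betaIntegral hs has, ← hbeta.2, add_sub_cancel]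
  rw [add_sub_cancel] at hbeta
  exact hasMellin_const_smul hbeta.1 (Complex.Gamma a)

end BetaMellin

theorem mellinInv_eq_of_hasMellin {E : Type*} [NormedAddCommGroup E] [NormedSpace ℂ E]
    [CompleteSpace E] {f : ℝ → E} {F : ℂ → E} {σ x : ℝ} (hx : 0 < x)
    (hf : ∀ τ : ℝ, HasMellin f (σ + τ * I) (F (σ + τ * I))) (hF : VerticalIntegrable F σ)
    (hfx : ContinuousAt f x) : mellinInv σ F x = f x := by
  have hmellin (τ : ℝ) : mellin f (σ + τ * I) = F (σ + τ * I) := (hf τ).2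
  rw [← mellinInv_mellin_eq σ f hx (by simpa using (hf 0).1)
    (by simpa only [VerticalIntegrable, hmellin] using hF) hfx]
  simp only [mellinInv, hmellin]

theorem mellinInv_Gamma_mul_Gamma_sub {a : ℂ} {c x : ℝ} (hc : 0 < c) (hca : c < a.re)
    (hx : 0 < x) :
    mellinInv c (fun s ↦ Complex.Gamma s * Complex.Gamma (a - s)) x =
      Complex.Gamma a * ((1 + x : ℝ) : ℂ) ^ (-a) := by
  refine mellinInv_eq_of_hasMellin (f := fun x : ℝ ↦ Complex.Gamma a * ((1 + x : ℝ) : ℂ) ^ (-a)) hx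
    (fun τ ↦ hasMellin_Gamma_mul_one_add_cpow_neg (by simpa using hc) (by simpa using hca))
    (verticalIntegrable_Gamma_mul_Gamma_sub hc hca) ?_
  exact continuousAt_const.mul (ContinuousAt.cpow (by fun_prop) continuousAt_const
    (ofReal_mem_slitPlane.2 (by positivity)))

/-- Mellin–Barnes formula: for `Re a > 0`, `0 < c < Re a` and real `x > 0`,
`(1/2π) ∫_ℝ Γ(c+iτ) Γ(a−c−iτ) x^{−c−iτ} dτ = Γ(a) (1+x)^{−a}`,
the integral being absolutely convergent and all complex powers principal. -/
theorem stmt11 (a : ℂ) (ha : 0 < a.re) (c : ℝ) (hc0 : 0 < c) (hca : c < a.re)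
    (x : ℝ) (hx : 0 < x) :
    Integrable (fun τ : ℝ =>
        Complex.Gamma ((c : ℂ) + Complex.I * τ) * Complex.Gamma (a - c - Complex.I * τ) *
          (x : ℂ) ^ (-(c : ℂ) - Complex.I * τ)) ∧
    (1 / (2 * (Real.pi : ℂ))) *
        ∫ τ : ℝ, Complex.Gamma ((c : ℂ) + Complex.I * τ) *
          Complex.Gamma (a - c - Complex.I * τ) * (x : ℂ) ^ (-(c : ℂ) - Complex.I * τ) =
      Complex.Gamma a * ((1 + x : ℝ) : ℂ) ^ (-a) := by
  have hintegrand (τ : ℝ) :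
      Complex.Gamma ((c : ℂ) + I * τ) * Complex.Gamma (a - c - I * τ) *
          (x : ℂ) ^ (-(c : ℂ) - I * τ) =
        (x : ℂ) ^ (-((c : ℂ) + τ * I)) •
          (Complex.Gamma (c + τ * I) * Complex.Gamma (a - (c + τ * I))) := by
    rw [mul_comm I, sub_sub, neg_add', smul_eq_mul, mul_comm]
  simp_rw [hintegrand]
  refine ⟨verticalIntegrable_cpow_neg_smul (verticalIntegrable_Gamma_mul_Gamma_sub hc0 hca) hx, ?_⟩
  rw [← mellinInv_Gamma_mul_Gamma_sub hc0 hca hx, mellinInv, real_smul]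
  push_cast
  rfl
end

section
/- The map Φ : (0,∞)² → (0,∞)² defined by Φ(α, x) = (αx/(α+1), x/(α+1)) is a bijection with inverse (x₁, x₂) ↦ (x₁/x₂, x₁ + x₂), and it preserves the measure μ = (dx₁/x₁)(dx₂/x₂) on (0,∞)² (i.e. the pushforward of μ under Φ is μ). Consequently, the composition operator f ↦ f ∘ Φ is a unitary operator on L²((0,∞)², μ). (This map implements the unitary equivalence R₊ ⊗ R₊ ≅ L²(ℝ₊, dα/α) ⊗ R₊ of ax+b group representations.) -/
open MeasureTheory

/-- The multiplicatively invariant measure `(dx₁/x₁)(dx₂/x₂)` on `ℝ²`,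
concentrated on `(0,∞)²` (the density `ENNReal.ofReal x⁻¹` vanishes for `x ≤ 0`). -/
noncomputable def muHaar2 : Measure (ℝ × ℝ) :=
  ((volume : Measure ℝ).withDensity fun x => ENNReal.ofReal x⁻¹).prod
    ((volume : Measure ℝ).withDensity fun x => ENNReal.ofReal x⁻¹)

/-- `Φ(α, x) = (αx/(α+1), x/(α+1))`. -/
noncomputable def PhiMap (p : ℝ × ℝ) : ℝ × ℝ :=
  (p.1 * p.2 / (p.1 + 1), p.2 / (p.1 + 1))

/-- `Ψ(x₁, x₂) = (x₁/x₂, x₁ + x₂)`. -/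
noncomputable def PsiMap (p : ℝ × ℝ) : ℝ × ℝ :=
  (p.1 / p.2, p.1 + p.2)

/-!
`Φ` is the composite of the shears `(α, x) ↦ (α, x / (α + 1)) = (α, y)` and `(α, y) ↦ (α y, y)`.
Each of them multiplies one coordinate by a positive function of the other, so it preserves the
product measure by Fubini and the dilation invariance of `dx/x`. The inverse of `Φ` then
preserves the measure as well.
-/

open Set
open scoped ENNReal

section General

variable {α β : Type*} [MeasurableSpace α] [MeasurableSpace β] {μ : Measure α} {ν : Measure β}
  {f : α → β} {g : β → α}

theorem map_withDensity_comp (hf : Measurable f) {ρ : β → ℝ≥0∞} (hρ : Measurable ρ) :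
    (μ.withDensity (ρ ∘ f)).map f = (μ.map f).withDensity ρ := by
  ext s hs
  rw [Measure.map_apply hf hs, withDensity_apply _ (hf hs), withDensity_apply _ hs,
    setLIntegral_map hs hρ hf]
  rfl

theorem measurePreserving_of_ae_leftInverse (hf : MeasurePreserving f μ ν) (hg : Measurable g)
    (hgf : g ∘ f =ᵐ[μ] id) : MeasurePreserving g ν μ where
  measurable := hg
  map_eq := by
    rw [← hf.map_eq, Measure.map_map hg hf.measurable, Measure.map_congr hgf, Measure.map_id]

-- For a non-measurable integrand, `lintegral_map_le` gives only one inequality for each of the two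
-- maps; the two together give equality.
theorem lintegral_comp_of_ae_rightInverse (hf : MeasurePreserving f μ ν)
    (hg : MeasurePreserving g ν μ) (hfg : f ∘ g =ᵐ[ν] id) (F : β → ℝ≥0∞) :
    ∫⁻ x, F (f x) ∂μ = ∫⁻ y, F y ∂ν := by
  apply le_antisymm
  · calc ∫⁻ x, F (f x) ∂μ = ∫⁻ x, F (f x) ∂ν.map g := by rw [hg.map_eq]
      _ ≤ ∫⁻ y, F (f (g y)) ∂ν := lintegral_map_le _ g
      _ = ∫⁻ y, F y ∂ν := lintegral_congr_ae (hfg.fun_comp F)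
  · calc ∫⁻ y, F y ∂ν = ∫⁻ y, F y ∂μ.map f := by rw [hf.map_eq]
      _ ≤ ∫⁻ x, F (f x) ∂μ := lintegral_map_le F f

end General

/-- The measure `dx/x` on `ℝ`, concentrated on `(0,∞)`: the Haar measure of the multiplicative group
`(0,∞)`, and each of the two factors of `muHaar2`. -/
noncomputable def haarIoi : Measure ℝ :=
  (volume : Measure ℝ).withDensity fun x => ENNReal.ofReal x⁻¹

namespace haarIoi

instance : SFinite haarIoi := by
  unfold haarIoi
  infer_instance

theorem ae_pos : ∀ᵐ x ∂haarIoi, 0 < x := by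
  rw [haarIoi, ae_withDensity_iff (by fun_prop)]
  exact ae_of_all _ fun x hx => inv_pos.1 (ENNReal.ofReal_pos.1 (pos_iff_ne_zero.2 hx))

theorem map_mul_left {c : ℝ} (hc : 0 < c) : haarIoi.map (c * ·) = haarIoi := by
  let ρ : ℝ → ℝ≥0∞ := fun y => ENNReal.ofReal y⁻¹
  have hρ : Measurable ρ := by fun_prop
  have hρ_scale : ρ = (ENNReal.ofReal c • ρ) ∘ (c * ·) := by
    funext x
    simp only [ρ, Function.comp_apply, Pi.smul_apply, smul_eq_mul]
    rw [← ENNReal.ofReal_mul hc.le, mul_inv, mul_inv_cancel_left₀ hc.ne']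
  have hvol : (volume : Measure ℝ).map (c * ·) = ENNReal.ofReal c⁻¹ • volume := by
    rw [Real.map_volume_mul_left hc.ne', abs_of_pos (inv_pos.2 hc)]
  calc haarIoi.map (c * ·)
      = (volume.withDensity ((ENNReal.ofReal c • ρ) ∘ (c * ·))).map (c * ·) := by
        rw [← hρ_scale]; rfl
    _ = (ENNReal.ofReal c⁻¹ • volume).withDensity (ENNReal.ofReal c • ρ) := by
        rw [map_withDensity_comp (by fun_prop) (hρ.const_smul _), hvol]
    _ = (ENNReal.ofReal c⁻¹ * ENNReal.ofReal c) • volume.withDensity ρ := by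
        rw [withDensity_smul_measure, withDensity_smul _ hρ, smul_smul]
    _ = haarIoi := by
        rw [← ENNReal.ofReal_mul (inv_pos.2 hc).le, inv_mul_cancel₀ hc.ne', ENNReal.ofReal_one,
          one_smul]
        rfl

variable {α : Type*} [MeasurableSpace α] {ν : Measure α} [SFinite ν] {c : α → ℝ}

theorem measurePreserving_mul_snd (hc : Measurable c) (hc_pos : ∀ᵐ a ∂ν, 0 < c a) :
    MeasurePreserving (fun p : α × ℝ => (p.1, c p.1 * p.2)) (ν.prod haarIoi) (ν.prod haarIoi) :=
  (MeasurePreserving.id ν).skew_product (g := fun a x => c a * x)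
    ((hc.comp measurable_fst).mul measurable_snd) (hc_pos.mono fun _ => map_mul_left)

theorem measurePreserving_mul_fst (hc : Measurable c) (hc_pos : ∀ᵐ a ∂ν, 0 < c a) :
    MeasurePreserving (fun p : ℝ × α => (c p.2 * p.1, p.2)) (haarIoi.prod ν) (haarIoi.prod ν) :=
  Measure.measurePreserving_swap.comp
    ((measurePreserving_mul_snd hc hc_pos).comp Measure.measurePreserving_swap)

end haarIoi

theorem muHaar2_eq_prod : muHaar2 = haarIoi.prod haarIoi := rfl

theorem ae_muHaar2_mem_quadrant : ∀ᵐ p ∂muHaar2, p ∈ Ioi (0 : ℝ) ×ˢ Ioi (0 : ℝ) := by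
  rw [muHaar2_eq_prod]
  filter_upwards [Measure.quasiMeasurePreserving_fst.ae haarIoi.ae_pos,
    Measure.quasiMeasurePreserving_snd.ae haarIoi.ae_pos] with p h₁ h₂
  exact ⟨h₁, h₂⟩

theorem mapsTo_PhiMap : MapsTo PhiMap (Ioi 0 ×ˢ Ioi 0) (Ioi 0 ×ˢ Ioi 0) := by
  rintro ⟨a, x⟩ ⟨ha : 0 < a, hx : 0 < x⟩
  have ha' : 0 < a + 1 := by positivity
  exact ⟨div_pos (mul_pos ha hx) ha', div_pos hx ha'⟩

theorem mapsTo_PsiMap : MapsTo PsiMap (Ioi 0 ×ˢ Ioi 0) (Ioi 0 ×ˢ Ioi 0) := by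
  rintro ⟨x, y⟩ ⟨hx : 0 < x, hy : 0 < y⟩
  exact ⟨div_pos hx hy, add_pos hx hy⟩

theorem invOn_PsiMap_PhiMap : InvOn PsiMap PhiMap (Ioi 0 ×ˢ Ioi 0) (Ioi 0 ×ˢ Ioi 0) := by
  constructor <;> rintro ⟨x, y⟩ ⟨hx : 0 < x, hy : 0 < y⟩ <;>
    ext <;> simp only [PsiMap, PhiMap] <;> field_simp

theorem measurePreserving_PhiMap : MeasurePreserving PhiMap muHaar2 muHaar2 := by
  have hdiv : MeasurePreserving (fun p : ℝ × ℝ => (p.1, (p.1 + 1)⁻¹ * p.2)) muHaar2 muHaar2 :=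
    haarIoi.measurePreserving_mul_snd (c := fun a => (a + 1)⁻¹) (by fun_prop)
      (haarIoi.ae_pos.mono fun a ha => by positivity)
  have hmul : MeasurePreserving (fun p : ℝ × ℝ => (p.2 * p.1, p.2)) muHaar2 muHaar2 :=
    haarIoi.measurePreserving_mul_fst measurable_id haarIoi.ae_pos
  convert hmul.comp hdiv using 1
  ext p <;> simp only [PhiMap, Function.comp_apply] <;> ring

theorem measurePreserving_PsiMap : MeasurePreserving PsiMap muHaar2 muHaar2 :=
  measurePreserving_of_ae_leftInverse measurePreserving_PhiMap (by unfold PsiMap; fun_prop)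
    (ae_muHaar2_mem_quadrant.mono invOn_PsiMap_PhiMap.1)

theorem lintegral_comp_PhiMap (F : ℝ × ℝ → ℝ≥0∞) :
    ∫⁻ p, F (PhiMap p) ∂muHaar2 = ∫⁻ p, F p ∂muHaar2 :=
  lintegral_comp_of_ae_rightInverse measurePreserving_PhiMap measurePreserving_PsiMap
    (ae_muHaar2_mem_quadrant.mono invOn_PsiMap_PhiMap.2) F

theorem stmt13_general :
    BijOn PhiMap (Ioi 0 ×ˢ Ioi 0) (Ioi 0 ×ˢ Ioi 0) ∧
    InvOn PsiMap PhiMap (Ioi 0 ×ˢ Ioi 0) (Ioi 0 ×ˢ Ioi 0) ∧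
    MeasurePreserving PhiMap muHaar2 muHaar2 ∧
    MeasurePreserving PsiMap muHaar2 muHaar2 ∧
    ∀ F : ℝ × ℝ → ℝ≥0∞, ∫⁻ p, F (PhiMap p) ∂muHaar2 = ∫⁻ p, F p ∂muHaar2 :=
  ⟨invOn_PsiMap_PhiMap.bijOn mapsTo_PhiMap mapsTo_PsiMap, invOn_PsiMap_PhiMap,
    measurePreserving_PhiMap, measurePreserving_PsiMap, lintegral_comp_PhiMap⟩

/-- `Φ(α,x) = (αx/(α+1), x/(α+1))` is a measure-preserving bijection of
`((0,∞)², (dx₁/x₁)(dx₂/x₂))` with inverse `(x₁,x₂) ↦ (x₁/x₂, x₁+x₂)`, and composition with `Φ`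
preserves the `L²` norm, hence is a unitary operator on `L²((0,∞)², μ)`. -/
theorem stmt13 :
    Set.BijOn PhiMap (Set.Ioi 0 ×ˢ Set.Ioi 0) (Set.Ioi 0 ×ˢ Set.Ioi 0) ∧
    (∀ p ∈ (Set.Ioi (0:ℝ) ×ˢ Set.Ioi (0:ℝ)), PsiMap (PhiMap p) = p) ∧
    (∀ p ∈ (Set.Ioi (0:ℝ) ×ˢ Set.Ioi (0:ℝ)), PhiMap (PsiMap p) = p) ∧
    Measure.map PhiMap muHaar2 = muHaar2 ∧
    (∀ f : ℝ × ℝ → ℂ, Measurable f →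
      ∫⁻ p, ‖f (PhiMap p)‖₊ ^ 2 ∂muHaar2 = ∫⁻ p, ‖f p‖₊ ^ 2 ∂muHaar2) := by
  obtain ⟨hbij, hinv, hΦ, -, hlint⟩ := stmt13_general
  exact ⟨hbij, fun _ hp => hinv.1 hp, fun _ hp => hinv.2 hp, hΦ.map_eq,
    fun f _ => hlint fun p => ‖f p‖₊ ^ 2⟩
end

section
/- The map Φ(α, x) = (αx/|α−1|, x/|α−1|) is a bijection from ((0,∞)∖{1}) × (0,∞) onto {(x₁, x₂) ∈ (0,∞)² : x₁ ≠ x₂}, with inverse (x₁, x₂) ↦ (x₁/x₂, |x₁ − x₂|), and it preserves the measure μ = (dx₁/x₁)(dx₂/x₂). Consequently, f ↦ f ∘ Φ is a unitary operator from L²({(x₁,x₂) ∈ (0,∞)² : x₁ ≠ x₂}, μ) onto L²(((0,∞)∖{1}) × (0,∞), μ). (This map implements the unitary equivalence R₊ ⊗ R₋ ≅ L²(ℝ_{<1}, dα/α) ⊗ R₋ ⊕ L²(ℝ_{>1}, dα/α) ⊗ R₊ of ax+b group representations.) -/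
open MeasureTheory

/-- `Φ(α, x) = (αx/|α−1|, x/|α−1|)`. -/
noncomputable def PhiMap2 (p : ℝ × ℝ) : ℝ × ℝ :=
  (p.1 * p.2 / |p.1 - 1|, p.2 / |p.1 - 1|)

/-- `Ψ(x₁, x₂) = (x₁/x₂, |x₁ − x₂|)`. -/
noncomputable def PsiMap2 (p : ℝ × ℝ) : ℝ × ℝ :=
  (p.1 / p.2, |p.1 - p.2|)

/-- The domain `((0,∞) ∖ {1}) × (0,∞)`. -/
def domA : Set (ℝ × ℝ) := (Set.Ioi 0 \ {1}) ×ˢ Set.Ioi 0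

/-- The target `{(x₁,x₂) ∈ (0,∞)² : x₁ ≠ x₂}`. -/
def domB : Set (ℝ × ℝ) := {p | p.1 ∈ Set.Ioi (0:ℝ) ∧ p.2 ∈ Set.Ioi (0:ℝ) ∧ p.1 ≠ p.2}

/-!
In the intermediate variable `y = x/|α−1|` the map `Φ` factors as
`(α, x) ↦ (α, y) ↦ (αy, y)`: for fixed `α` the first map dilates `x`, and for fixed `y` the second
dilates `α`. Since `dx/x` is invariant under positive dilations, Fubini shows that both maps
preserve `μ`. Since `domA = Φ⁻¹(domB)`, so does the restriction of `Φ` to `domA`.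
-/

/-- The invariant measure `dx/x` of the multiplicative group `(0,∞)`, extended by zero to `ℝ`: the
common factor of the product measure `muHaar2`. -/
noncomputable def mulHaar : Measure ℝ :=
  volume.withDensity fun x => ENNReal.ofReal x⁻¹

instance : SFinite mulHaar :=
  inferInstanceAs (SFinite (volume.withDensity fun x : ℝ => ENNReal.ofReal x⁻¹))

lemma lintegral_mulHaar {f : ℝ → ENNReal} (hf : Measurable f) :
    ∫⁻ x, f x ∂mulHaar = ∫⁻ x, ENNReal.ofReal x⁻¹ * f x :=
  lintegral_withDensity_eq_lintegral_mul _ (by fun_prop) hf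

lemma mulHaar_absolutelyContinuous_volume : mulHaar ≪ volume :=
  withDensity_absolutelyContinuous _ _

lemma ae_mulHaar_pos : ∀ᵐ x ∂mulHaar, 0 < x :=
  (ae_withDensity_iff (by fun_prop)).2 <| .of_forall fun _ hx =>
    inv_pos.1 (ENNReal.ofReal_pos.1 (pos_iff_ne_zero.2 hx))

lemma measurePreserving_mul_left_mulHaar {c : ℝ} (hc : 0 < c) :
    MeasurePreserving (c * ·) mulHaar mulHaar := by
  refine ⟨by fun_prop, Measure.ext_of_lintegral _ fun f hf => ?_⟩
  have density_eq (x : ℝ) : ENNReal.ofReal x⁻¹ = ENNReal.ofReal c * ENNReal.ofReal (c * x)⁻¹ := by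
    rw [← ENNReal.ofReal_mul hc.le, mul_inv, mul_inv_cancel_left₀ hc.ne']
  calc ∫⁻ x, f x ∂mulHaar.map (c * ·)
      = ∫⁻ x, f (c * x) ∂mulHaar := lintegral_map hf (by fun_prop)
    _ = ∫⁻ x, ENNReal.ofReal x⁻¹ * f (c * x) := lintegral_mulHaar (by fun_prop)
    _ = ENNReal.ofReal c * ∫⁻ x, ENNReal.ofReal (c * x)⁻¹ * f (c * x) := by
        rw [← lintegral_const_mul _ (by fun_prop)]
        exact lintegral_congr fun x => by rw [density_eq, mul_assoc]
    _ = ENNReal.ofReal |c| * ∫⁻ y, ENNReal.ofReal y⁻¹ * f y ∂volume.map (c * ·) := by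
        rw [abs_of_pos hc, lintegral_map (by fun_prop) (by fun_prop)]
    _ = ∫⁻ y, ENNReal.ofReal y⁻¹ * f y := by
        rw [← smul_eq_mul, ← lintegral_smul_measure, Real.smul_map_volume_mul_left hc.ne']
    _ = ∫⁻ y, f y ∂mulHaar := (lintegral_mulHaar hf).symm

lemma measurePreserving_prod_mul_mulHaar {β : Type*} [MeasurableSpace β] {ν : Measure β}
    [SFinite ν] {c : β → ℝ} (hc : Measurable c) (hc_pos : ∀ᵐ b ∂ν, 0 < c b) :
    MeasurePreserving (fun p : β × ℝ => (p.1, c p.1 * p.2))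
      (ν.prod mulHaar) (ν.prod mulHaar) :=
  (MeasurePreserving.id ν).skew_product (g := fun b x => c b * x)
    (by simp only [Function.uncurry_def]; fun_prop)
    (hc_pos.mono fun _ hb => (measurePreserving_mul_left_mulHaar hb).map_eq)

lemma measurePreserving_PhiMap2 : MeasurePreserving PhiMap2 muHaar2 muHaar2 := by
  have ae_ne_one : ∀ᵐ α ∂mulHaar, α ≠ 1 :=
    mulHaar_absolutelyContinuous_volume.ae_le (Measure.ae_ne volume 1)
  have dilation_pos : ∀ᵐ α ∂mulHaar, 0 < |α - 1|⁻¹ :=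
    ae_ne_one.mono fun _ hα => inv_pos.2 (abs_pos.2 (sub_ne_zero.2 hα))
  have scale_snd : MeasurePreserving (fun p : ℝ × ℝ => (p.1, |p.1 - 1|⁻¹ * p.2)) muHaar2 muHaar2 :=
    measurePreserving_prod_mul_mulHaar (by fun_prop) dilation_pos
  have scale_fst : MeasurePreserving (fun p : ℝ × ℝ => (p.2 * p.1, p.2)) muHaar2 muHaar2 :=
    (Measure.measurePreserving_swap.comp
      (measurePreserving_prod_mul_mulHaar measurable_id ae_mulHaar_pos)).comp
        Measure.measurePreserving_swap
  have factorization :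
      PhiMap2 = (fun p => (p.2 * p.1, p.2)) ∘ fun p => (p.1, |p.1 - 1|⁻¹ * p.2) := by
    ext p <;> simp only [PhiMap2, Function.comp_apply] <;> ring
  exact factorization ▸ scale_fst.comp scale_snd

lemma measurableSet_domB : MeasurableSet domB :=
  (measurable_fst measurableSet_Ioi).inter ((measurable_snd measurableSet_Ioi).inter
    (measurableSet_eq_fun measurable_fst measurable_snd).compl)

lemma preimage_PhiMap2_domB : PhiMap2 ⁻¹' domB = domA := by
  ext ⟨α, x⟩
  simp only [PhiMap2, domA, domB, Set.mem_preimage, Set.mem_ofPred_eq, Set.mem_prod, Set.mem_sdiff,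
    Set.mem_Ioi, Set.mem_singleton_iff]
  constructor
  · rintro ⟨hαx, hx, -⟩
    -- `α = 1` is excluded because division by zero gives `0`, which is not positive.
    have hd : 0 < |α - 1| :=
      (abs_nonneg _).lt_of_ne' fun h => by simp only [h, div_zero, lt_irrefl] at hx
    have hx : 0 < x := (div_pos_iff_of_pos_right hd).1 hx
    have hα : 0 < α := (mul_pos_iff_of_pos_right hx).1 ((div_pos_iff_of_pos_right hd).1 hαx)
    exact ⟨⟨hα, sub_ne_zero.1 (abs_pos.1 hd)⟩, hx⟩
  · rintro ⟨⟨hα, hα1⟩, hx⟩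
    have hd : 0 < |α - 1| := abs_pos.2 (sub_ne_zero.2 hα1)
    refine ⟨by positivity, by positivity, fun h => hα1 ?_⟩
    exact (mul_eq_right₀ hx.ne').1 ((div_left_inj' hd.ne').1 h)

lemma leftInvOn_PsiMap2_PhiMap2 : Set.LeftInvOn PsiMap2 PhiMap2 domA := by
  rintro ⟨α, x⟩ ⟨⟨-, hα1⟩, hx : 0 < x⟩
  have hd : |α - 1| ≠ 0 := abs_ne_zero.2 (sub_ne_zero.2 hα1)
  ext
  · calc α * x / |α - 1| / (x / |α - 1|)
        = α * x / x := div_div_div_cancel_right₀ hd _ _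
      _ = α := mul_div_cancel_right₀ _ hx.ne'
  · calc |(α * x / |α - 1| - x / |α - 1|)|
        = |α - 1| * x / |α - 1| := by
          rw [← sub_div, ← sub_one_mul, abs_div, abs_abs, abs_mul, abs_of_pos hx]
      _ = x := mul_div_cancel_left₀ _ hd

lemma rightInvOn_PsiMap2_PhiMap2 : Set.RightInvOn PsiMap2 PhiMap2 domB := by
  rintro ⟨x₁, x₂⟩ ⟨-, hx₂ : 0 < x₂, hne⟩
  have hd : |x₁ - x₂| ≠ 0 := abs_ne_zero.2 (sub_ne_zero.2 hne)
  have abs_ratio_sub_one : |x₁ / x₂ - 1| = |x₁ - x₂| / x₂ := by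
    rw [div_sub_one hx₂.ne', abs_div, abs_of_pos hx₂]
  ext <;> simp only [PsiMap2, PhiMap2, abs_ratio_sub_one] <;> field_simp

lemma mapsTo_PsiMap2 : Set.MapsTo PsiMap2 domB domA := fun p hp => by
  rw [← preimage_PhiMap2_domB, Set.mem_preimage, rightInvOn_PsiMap2_PhiMap2 hp]
  exact hp

lemma bijOn_PhiMap2 : Set.BijOn PhiMap2 domA domB :=
  Set.InvOn.bijOn ⟨leftInvOn_PsiMap2_PhiMap2, rightInvOn_PsiMap2_PhiMap2⟩
    preimage_PhiMap2_domB.ge mapsTo_PsiMap2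

lemma measurePreserving_PhiMap2_restrict :
    MeasurePreserving PhiMap2 (muHaar2.restrict domA) (muHaar2.restrict domB) :=
  preimage_PhiMap2_domB ▸ measurePreserving_PhiMap2.restrict_preimage measurableSet_domB

/-- `Φ(α,x) = (αx/|α−1|, x/|α−1|)` is a measure-preserving bijection from
`((0,∞)∖{1}) × (0,∞)` onto `{(x₁,x₂) ∈ (0,∞)² : x₁ ≠ x₂}` for `μ = (dx₁/x₁)(dx₂/x₂)`,
with inverse `(x₁,x₂) ↦ (x₁/x₂, |x₁−x₂|)`, and composition with `Φ` preserves the `L²` norm,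
hence gives a unitary `L²(domB, μ) → L²(domA, μ)`. -/
theorem stmt14 :
    Set.BijOn PhiMap2 domA domB ∧
    (∀ p ∈ domA, PsiMap2 (PhiMap2 p) = p) ∧
    (∀ p ∈ domB, PhiMap2 (PsiMap2 p) = p) ∧
    Measure.map PhiMap2 (muHaar2.restrict domA) = muHaar2.restrict domB ∧
    (∀ f : ℝ × ℝ → ℂ, Measurable f →
      ∫⁻ p in domA, ‖f (PhiMap2 p)‖₊ ^ 2 ∂muHaar2 = ∫⁻ p in domB, ‖f p‖₊ ^ 2 ∂muHaar2) := by
  exact ⟨bijOn_PhiMap2, fun _ hp => leftInvOn_PsiMap2_PhiMap2 hp,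
    fun _ hp => rightInvOn_PsiMap2_PhiMap2 hp, measurePreserving_PhiMap2_restrict.map_eq,
    fun f hf => measurePreserving_PhiMap2_restrict.lintegral_comp (f := fun p => ‖f p‖₊ ^ 2)
      (by fun_prop)⟩
end

section
/- The space 𝒲 is dense in L²(ℝ): the ℂ-linear span of the functions x ↦ e^{−Ax² + Bx} P(x), for A > 0 real, B ∈ ℂ and P a complex polynomial, is dense in the complex Hilbert space L²(ℝ). -/
open MeasureTheory

/-- The space `𝒲`: finite ℂ-linear combinations of functions `x ↦ e^{−Ax²+Bx} P(x)`
with `A > 0` real, `B ∈ ℂ` and `P` a complex polynomial. -/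
noncomputable def Wspace : Set (ℝ → ℂ) :=
  (Submodule.span ℂ {f : ℝ → ℂ | ∃ A : ℝ, ∃ B : ℂ, ∃ P : Polynomial ℂ, 0 < A ∧
    f = fun x : ℝ => Complex.exp (-(A : ℂ) * (x : ℂ) ^ 2 + B * x) * P.eval (x : ℂ)} :
      Set (ℝ → ℂ))

/-!
If `g ∈ L²(μ)` is orthogonal to every modulation `x ↦ e^{iL(x)} φ(x)` of a function `φ ∈ L²(μ)`,
then the complex measure with density `conj φ · g` has vanishing characteristic function, so
`conj φ · g = 0` almost everywhere; if `φ` vanishes almost nowhere, this forces `g = 0`. Hence the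
modulations of `φ` span a dense subspace. On the real line, the modulations of `x ↦ e^{-x²}`
all belong to `𝒲`.
-/

open Complex ComplexConjugate Submodule

section RepresentedIn

variable {α F 𝕜 : Type*} [MeasurableSpace α] [NormedAddCommGroup F] [NormedRing 𝕜] [Module 𝕜 F]
  [IsBoundedSMul 𝕜 F]

/-- The subspace of `Lᵖ(μ)` of the classes that have a representative in a given space `S` of
functions. The members of `S` need not themselves be in `Lᵖ`. -/
def lpRepresentedIn (p : ENNReal) (μ : Measure α) (S : Submodule 𝕜 (α → F)) :
    Submodule 𝕜 (Lp F p μ) where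
  carrier := {g | ∃ f ∈ S, g =ᵐ[μ] f}
  zero_mem' := ⟨0, S.zero_mem, Lp.coeFn_zero F p μ⟩
  add_mem' := by
    rintro g₁ g₂ ⟨f₁, hf₁, hgf₁⟩ ⟨f₂, hf₂, hgf₂⟩
    exact ⟨f₁ + f₂, S.add_mem hf₁ hf₂, (Lp.coeFn_add g₁ g₂).trans (hgf₁.add hgf₂)⟩
  smul_mem' := by
    rintro c g ⟨f, hf, hgf⟩
    exact ⟨c • f, S.smul_mem c hf, (Lp.coeFn_smul c g).trans (hgf.const_smul c)⟩

end RepresentedIn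

section Modulation

variable {E : Type*} [NormedAddCommGroup E] [NormedSpace ℝ E]

/-- The modulation `x ↦ e^{iL(x)} f(x)` of a function `f` by the frequency `L`, a continuous linear
form; there is no factor `2π` in the phase. -/
noncomputable def modulation (f : E → ℂ) (L : StrongDual ℝ E) (x : E) : ℂ :=
  exp (L x * I) * f x

theorem norm_modulation (f : E → ℂ) (L : StrongDual ℝ E) (x : E) :
    ‖modulation f L x‖ = ‖f x‖ := by
  rw [modulation, norm_mul, norm_exp_ofReal_mul_I, one_mul]

theorem conj_modulation (f : E → ℂ) (L : StrongDual ℝ E) (x : E) :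
    conj (modulation f L x) = modulation (fun y ↦ conj (f y)) (-L) x := by
  simp [modulation, ← exp_conj]

variable [MeasurableSpace E] {μ : Measure E}

theorem charFunDual_withDensity_ofReal {f : E → ℝ} (hf : AEMeasurable f μ)
    (L : StrongDual ℝ E) :
    charFunDual (μ.withDensity fun x ↦ ENNReal.ofReal (f x)) L =
      ∫ x, modulation (fun y ↦ (max (f y) 0 : ℝ)) L x ∂μ := by
  rw [charFunDual_apply, integral_withDensity_eq_integral_toReal_smul₀ hf.ennreal_ofReal
    (.of_forall fun _ ↦ ENNReal.ofReal_lt_top)]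
  simp only [ENNReal.toReal_ofReal', real_smul, modulation, mul_comm]

variable [OpensMeasurableSpace E]

theorem memLp_modulation {p : ENNReal} {f : E → ℂ} (hf : MemLp f p μ) (L : StrongDual ℝ E) :
    MemLp (modulation f L) p μ := by
  have h_phase : Measurable fun x ↦ exp (L x * I) := by fun_prop
  exact hf.congr_norm (h_phase.aestronglyMeasurable.mul hf.aestronglyMeasurable)
    (.of_forall fun x ↦ (norm_modulation f L x).symm)

theorem integrable_modulation {f : E → ℂ} (hf : Integrable f μ) (L : StrongDual ℝ E) :
    Integrable (modulation f L) μ :=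
  memLp_one_iff_integrable.1 (memLp_modulation (memLp_one_iff_integrable.2 hf) L)

end Modulation

section Density

variable {E : Type*} [NormedAddCommGroup E] [NormedSpace ℝ E] [CompleteSpace E]
  [SecondCountableTopology E] [MeasurableSpace E] [BorelSpace E] {μ : Measure E}

theorem ae_eq_zero_of_integral_modulation_ofReal_eq_zero {f : E → ℝ} (hf : Integrable f μ)
    (h : ∀ L, ∫ x, modulation (fun y ↦ (f y : ℂ)) L x ∂μ = 0) : f =ᵐ[μ] 0 := by
  have := isFiniteMeasure_withDensity_ofReal hf.2
  have : IsFiniteMeasure (μ.withDensity fun x ↦ ENNReal.ofReal (-f x)) :=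
    isFiniteMeasure_withDensity_ofReal hf.neg.2
  have h_char : charFunDual (μ.withDensity fun x ↦ ENNReal.ofReal (f x)) =
      charFunDual (μ.withDensity fun x ↦ ENNReal.ofReal (-f x)) := by
    ext L
    have h_pos : Integrable (fun x ↦ ((max (f x) 0 : ℝ) : ℂ)) μ := hf.pos_part.ofReal
    have h_neg : Integrable (fun x ↦ ((max (-f x) 0 : ℝ) : ℂ)) μ := hf.neg_part.ofReal
    rw [charFunDual_withDensity_ofReal hf.aemeasurable,
      charFunDual_withDensity_ofReal hf.aemeasurable.fun_neg, ← sub_eq_zero,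
      ← integral_sub (integrable_modulation h_pos L) (integrable_modulation h_neg L), ← h L]
    simp only [modulation, ← mul_sub, ← ofReal_sub, max_zero_sub_max_neg_zero_eq_self]
  have h_parts : (fun x ↦ ENNReal.ofReal (f x)) =ᵐ[μ] fun x ↦ ENNReal.ofReal (-f x) :=
    (withDensity_eq_iff hf.aemeasurable.ennreal_ofReal hf.aemeasurable.neg.ennreal_ofReal
      hf.lintegral_lt_top.ne).1 (Measure.ext_of_charFunDual h_char)
  filter_upwards [h_parts] with x hx
  have h_max : max (f x) 0 = max (-f x) 0 := by
    simpa only [ENNReal.toReal_ofReal'] using congrArg ENNReal.toReal hx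
  rw [Pi.zero_apply, ← max_zero_sub_max_neg_zero_eq_self (f x), h_max, sub_self]

theorem ae_re_eq_zero_of_integral_modulation_eq_zero {f : E → ℂ} (hf : Integrable f μ)
    (h : ∀ L, ∫ x, modulation f L x ∂μ = 0) : ∀ᵐ x ∂μ, (f x).re = 0 := by
  refine ae_eq_zero_of_integral_modulation_ofReal_eq_zero hf.re fun L ↦ ?_
  have h_conj : ∫ x, modulation (fun y ↦ conj (f y)) L x ∂μ = 0 := by
    rw [← neg_neg L]
    simp only [← conj_modulation, integral_conj, h, map_zero]
  have hf_conj : Integrable (fun x ↦ conj (f x)) μ :=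
    conjCLE.toContinuousLinearMap.integrable_comp hf
  calc ∫ x, modulation (fun y ↦ ((f y).re : ℂ)) L x ∂μ
      = ∫ x, (modulation f L x + modulation (fun y ↦ conj (f y)) L x) / 2 ∂μ := by
        simp only [modulation, re_eq_add_conj, ← mul_add, mul_div_assoc]
    _ = 0 := by
        rw [integral_div, integral_add (integrable_modulation hf L)
          (integrable_modulation hf_conj L), h, h_conj, add_zero, zero_div]

theorem ae_eq_zero_of_integral_modulation_eq_zero {f : E → ℂ} (hf : Integrable f μ)
    (h : ∀ L, ∫ x, modulation f L x ∂μ = 0) : f =ᵐ[μ] 0 := by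
  have h_im : ∀ᵐ x ∂μ, (-I * f x).re = 0 :=
    ae_re_eq_zero_of_integral_modulation_eq_zero (hf.const_mul (-I)) fun L ↦ by
      simp only [modulation, mul_left_comm _ (-I), integral_const_mul]
      exact mul_eq_zero_of_right _ (h L)
  filter_upwards [ae_re_eq_zero_of_integral_modulation_eq_zero hf h, h_im] with x hx_re hx_im
  exact Complex.ext hx_re (by simpa using hx_im)

theorem Lp_eq_zero_of_inner_modulation_eq_zero {φ : E → ℂ} (hφ : MemLp φ 2 μ)
    (hφ₀ : ∀ᵐ x ∂μ, φ x ≠ 0) {g : Lp ℂ 2 μ}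
    (h : ∀ L, inner ℂ ((memLp_modulation hφ L).toLp) g = 0) : g = 0 := by
  have h_int : Integrable (fun x ↦ conj (φ x) * g x) μ := hφ.star.integrable_mul (Lp.memLp g)
  have h_inner (L : StrongDual ℝ E) : ∫ x, modulation (fun y ↦ conj (φ y) * g y) L x ∂μ =
      inner ℂ ((memLp_modulation hφ (-L)).toLp) g := by
    rw [L2.inner_def]
    refine integral_congr_ae ?_
    filter_upwards [(memLp_modulation hφ (-L)).coeFn_toLp] with x hx
    rw [hx, RCLike.inner_apply', conj_modulation, neg_neg, modulation, modulation, mul_assoc]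
  have h_zero := ae_eq_zero_of_integral_modulation_eq_zero h_int fun L ↦ (h_inner L).trans (h (-L))
  rw [Lp.eq_zero_iff_ae_eq_zero]
  filter_upwards [h_zero, hφ₀] with x hx hx₀
  exact (mul_eq_zero.1 hx).resolve_left (star_ne_zero.2 hx₀)

theorem stmt16_general {φ : E → ℂ} (hφ : MemLp φ 2 μ) (hφ₀ : ∀ᵐ x ∂μ, φ x ≠ 0) :
    Dense {g : Lp ℂ 2 μ | ∃ f ∈ span ℂ (Set.range (modulation φ)), g =ᵐ[μ] f} := by
  let W := lpRepresentedIn 2 μ (span ℂ (Set.range (modulation φ)))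
  have h_mem (L : StrongDual ℝ E) : (memLp_modulation hφ L).toLp ∈ W :=
    ⟨_, subset_span ⟨L, rfl⟩, (memLp_modulation hφ L).coeFn_toLp⟩
  have h_orthogonal : Wᗮ = ⊥ := (Submodule.eq_bot_iff _).2 fun g hg ↦
    Lp_eq_zero_of_inner_modulation_eq_zero hφ hφ₀ fun L ↦ hg _ (h_mem L)
  exact dense_iff_topologicalClosure_eq_top.2 (topologicalClosure_eq_top_iff.2 h_orthogonal)

end Density

section Gaussian

theorem memLp_two_cexp_neg_mul_sq {b : ℂ} (hb : 0 < b.re) :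
    MemLp (fun x : ℝ ↦ exp (-b * (x : ℂ) ^ 2)) 2 := by
  have h_meas : Continuous fun x : ℝ ↦ exp (-b * (x : ℂ) ^ 2) := by fun_prop
  rw [memLp_two_iff_integrable_sq_norm h_meas.aestronglyMeasurable]
  refine (integrable_exp_neg_mul_sq (mul_pos two_pos hb)).congr (.of_forall fun x ↦ ?_)
  simp only [norm_cexp_neg_mul_sq, ← Real.exp_nat_mul]
  push_cast
  ring_nf

theorem modulation_cexp_neg_mul_sq_mem_Wspace {A : ℝ} (hA : 0 < A) (L : StrongDual ℝ ℝ) :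
    modulation (fun x : ℝ ↦ exp (-(A : ℂ) * (x : ℂ) ^ 2)) L ∈ Wspace := by
  refine subset_span ⟨A, L 1 * I, 1, hA, ?_⟩
  ext x
  have h_linear : L x = x * L 1 := by rw [← smul_eq_mul, ← map_smul, smul_eq_mul, mul_one]
  rw [modulation, ← exp_add, Polynomial.eval_one, mul_one, h_linear]
  push_cast
  ring_nf

theorem span_modulation_cexp_neg_mul_sq_subset_Wspace {A : ℝ} (hA : 0 < A) :
    (span ℂ (Set.range (modulation fun x : ℝ ↦ exp (-(A : ℂ) * (x : ℂ) ^ 2))) : Set (ℝ → ℂ)) ⊆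
      Wspace :=
  span_le.2 (Set.range_subset_iff.2 (modulation_cexp_neg_mul_sq_mem_Wspace hA))

end Gaussian

/-- `𝒲` is dense in `L²(ℝ)`: the set of elements of `L²(ℝ)` admitting a representative
in `𝒲` is dense. -/
theorem stmt16 :
    Dense {g : Lp ℂ 2 (volume : Measure ℝ) | ∃ f ∈ Wspace, ∀ᵐ x : ℝ, g x = f x} := by
  have h_dense := stmt16_general (memLp_two_cexp_neg_mul_sq (b := (1 : ℝ)) one_pos)
    (.of_forall fun _ ↦ exp_ne_zero _)
  refine h_dense.mono ?_
  rintro g ⟨f, hf, hgf⟩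
  exact ⟨f, span_modulation_cexp_neg_mul_sq_subset_Wspace one_pos hf, hgf⟩
end

section
/- Let β ∈ ℝ and let f be a locally integrable function on (0,∞) with f(x) = O(x^{−β+ε}) as x → ∞ for every ε > 0. Suppose there exist N ≥ 0, complex numbers A₀, …, A_N, complex exponents a₀, …, a_N with −β < Re(a₀) ≤ … ≤ Re(a_N), and a real number c > Re(a_N) such that f(x) − Σ_{k=0}^N A_k x^{a_k} = O(x^c) as x → 0⁺. Then the Mellin transform 𝓜f(s) is holomorphic on the strip {−Re(a₀) < Re(s) < β}, and the function s ↦ 𝓜f(s) − Σ_{k=0}^N A_k/(s + a_k) extends to a holomorphic function on the larger strip {−c < Re(s) < β}; in particular 𝓜f continues meromorphically to {−c < Re(s) < β} with (at most) simple poles at s = −a_k of residue A_k. -/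
open MeasureTheory Filter Topology Asymptotics

/-! Let `P` be the generalized polynomial `∑ k, x ^ a k • A k` cut off to `(0, 1]`. Its Mellin
transform is the sum of the polar parts `(s + a k)⁻¹ • A k`, since
`∫₀¹ x ^ (s - 1 + a) dx = 1 / (s + a)`. The difference `f - P` decays like `f` at infinity and is
`O(x ^ c)` at `0⁺`, so its Mellin transform is holomorphic on the whole strip `-c < re s < β`; this
is the required continuation. -/

section PowerAsymptotics

theorem isBigO_rpow_nhdsGT_zero_of_le {b c : ℝ} (hbc : b ≤ c) :
    (fun x : ℝ => x ^ c) =O[𝓝[>] 0] fun x : ℝ => x ^ b := by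
  refine .of_bound' ?_
  filter_upwards [Ioo_mem_nhdsGT (zero_lt_one' ℝ)] with x hx
  rw [Real.norm_of_nonneg (Real.rpow_nonneg hx.1.le _),
    Real.norm_of_nonneg (Real.rpow_nonneg hx.1.le _)]
  exact Real.rpow_le_rpow_of_exponent_ge hx.1 hx.2.le hbc

theorem isBigO_ofReal_cpow_nhdsGT_zero_of_le {a : ℂ} {b : ℝ} (hb : b ≤ a.re) :
    (fun x : ℝ => (x : ℂ) ^ a) =O[𝓝[>] 0] fun x : ℝ => x ^ b := by
  have norm_cpow : (fun x : ℝ => ‖(x : ℂ) ^ a‖) =ᶠ[𝓝[>] 0] fun x : ℝ => x ^ a.re :=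
    eventually_mem_nhdsWithin.mono fun _ hx => Complex.norm_cpow_eq_rpow_re_of_pos hx a
  exact (norm_cpow.trans_isBigO (isBigO_rpow_nhdsGT_zero_of_le hb)).of_norm_left

theorem continuousOn_ofReal_cpow_const_Ioi (a : ℂ) :
    ContinuousOn (fun x : ℝ => (x : ℂ) ^ a) (Set.Ioi 0) := fun x hx =>
  (Complex.continuousAt_ofReal_cpow_const x a (.inr (ne_of_gt hx))).continuousWithinAt

theorem isBigO_rpow_neg_of_forall_isBigO_rpow_add {E : Type*} [Norm E] {f : ℝ → E} {β r : ℝ}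
    (hf : ∀ ε : ℝ, 0 < ε → f =O[atTop] fun x : ℝ => x ^ (-β + ε)) (hr : r < β) :
    f =O[atTop] fun x : ℝ => x ^ (-r) := by
  simpa only [neg_add_cancel_left, ← sub_eq_add_neg, ← add_sub_assoc, neg_add_cancel, zero_sub]
    using hf (β - r) (sub_pos.2 hr)

end PowerAsymptotics

theorem locallyIntegrableOn_indicator {X E : Type*} [MeasurableSpace X] [TopologicalSpace X]
    [TopologicalSpace E] [ESeminormedAddMonoid E] {μ : Measure X} {f : X → E} {s t : Set X}
    (hf : LocallyIntegrableOn f s μ) (ht : MeasurableSet t) :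
    LocallyIntegrableOn (t.indicator f) s μ := fun x hx =>
  let ⟨u, hu, hfu⟩ := hf x hx
  ⟨u, hu, hfu.indicator ht⟩

theorem indicator_Ioc_eventuallyEq_atTop {E : Type*} [Zero E] (u v : ℝ) (g : ℝ → E) :
    (Set.Ioc u v).indicator g =ᶠ[atTop] 0 :=
  (eventually_gt_atTop v).mono fun _ hx => Set.indicator_of_notMem (fun h => hx.not_ge h.2) g

theorem indicator_Ioc_eventuallyEq_nhdsGT {E : Type*} [Zero E] {u v : ℝ} (huv : u < v)
    (g : ℝ → E) : (Set.Ioc u v).indicator g =ᶠ[𝓝[>] u] g :=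
  eventuallyEq_of_mem (Ioc_mem_nhdsGT huv) fun _ hx => Set.indicator_of_mem hx g

section VectorValued

variable {E : Type*} [NormedAddCommGroup E] [NormedSpace ℂ E]

section HasMellin

theorem hasMellin_smul_const [CompleteSpace E] {φ : ℝ → ℂ} {s m : ℂ} (h : HasMellin φ s m)
    (v : E) : HasMellin (fun x => φ x • v) s (m • v) := by
  obtain ⟨hconv, rfl⟩ := h
  simp only [HasMellin, MellinConvergent, mellin, ← smul_assoc]
  exact ⟨Integrable.smul_const hconv v, integral_smul_const _ v⟩

theorem hasMellin_finsetSum {ι : Type*} (u : Finset ι) {f : ι → ℝ → E} {m : ι → E} {s : ℂ}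
    (h : ∀ i ∈ u, HasMellin (f i) s (m i)) :
    HasMellin (fun x => ∑ i ∈ u, f i x) s (∑ i ∈ u, m i) := by
  simp only [HasMellin, MellinConvergent, mellin, Finset.smul_sum]
  refine ⟨integrable_finsetSum u fun i hi => (h i hi).1, ?_⟩
  rw [integral_finsetSum u fun i hi => (h i hi).1]
  exact Finset.sum_congr rfl fun i hi => (h i hi).2

end HasMellin

section Strip

variable {f : ℝ → E} {β b : ℝ}

theorem mellinConvergent_of_re_mem_strip (hloc : LocallyIntegrableOn f (Set.Ioi 0))
    (htop : ∀ ε : ℝ, 0 < ε → f =O[atTop] fun x : ℝ => x ^ (-β + ε))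
    (hzero : f =O[𝓝[>] 0] fun x : ℝ => x ^ b) {s : ℂ} (hbs : -b < s.re) (hsβ : s.re < β) :
    MellinConvergent f s := by
  obtain ⟨r, hsr, hrβ⟩ := exists_between hsβ
  rw [← neg_neg b] at hzero
  exact mellinConvergent_of_isBigO_rpow hloc
    (isBigO_rpow_neg_of_forall_isBigO_rpow_add htop hrβ) hsr hzero hbs

theorem differentiableOn_mellin_strip (hloc : LocallyIntegrableOn f (Set.Ioi 0))
    (htop : ∀ ε : ℝ, 0 < ε → f =O[atTop] fun x : ℝ => x ^ (-β + ε))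
    (hzero : f =O[𝓝[>] 0] fun x : ℝ => x ^ b) :
    DifferentiableOn ℂ (mellin f) {s : ℂ | -b < s.re ∧ s.re < β} := by
  rintro s ⟨hbs, hsβ⟩
  obtain ⟨r, hsr, hrβ⟩ := exists_between hsβ
  rw [← neg_neg b] at hzero
  exact (mellin_differentiableAt_of_isBigO_rpow hloc
    (isBigO_rpow_neg_of_forall_isBigO_rpow_add htop hrβ) hsr hzero hbs).differentiableWithinAt

end Strip

section CpowSum

variable {ι : Type*} [Fintype ι] {A : ι → E} {a : ι → ℂ} {b : ℝ}

/-- The generalized polynomial `x ↦ ∑ k, x ^ a k • A k` with complex exponents `a k` and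
vector coefficients `A k`, in which the expansion of a function at `0⁺` is expressed. -/
noncomputable def cpowSum (A : ι → E) (a : ι → ℂ) (x : ℝ) : E :=
  ∑ k, (x : ℂ) ^ a k • A k

theorem continuousOn_cpowSum (A : ι → E) (a : ι → ℂ) :
    ContinuousOn (cpowSum A a) (Set.Ioi 0) :=
  continuousOn_finsetSum _ fun k _ =>
    (continuousOn_ofReal_cpow_const_Ioi (a k)).smul continuousOn_const

theorem isBigO_cpowSum_nhdsGT_zero (hb : ∀ k, b ≤ (a k).re) :
    cpowSum A a =O[𝓝[>] 0] fun x : ℝ => x ^ b :=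
  IsBigO.fun_sum fun k _ => by
    simpa only [smul_eq_mul, mul_one] using
      (isBigO_ofReal_cpow_nhdsGT_zero_of_le (hb k)).smul
        (isBigO_const_const (A k) (one_ne_zero' ℝ) (𝓝[>] 0))

theorem hasMellin_indicator_cpowSum [CompleteSpace E] {s : ℂ} (hs : ∀ k, 0 < s.re + (a k).re) :
    HasMellin ((Set.Ioc 0 1).indicator (cpowSum A a)) s (∑ k, (s + a k)⁻¹ • A k) := by
  have indicator_sum : (Set.Ioc (0 : ℝ) 1).indicator (cpowSum A a) = fun x : ℝ =>
      ∑ k, (Set.Ioc (0 : ℝ) 1).indicator (fun t : ℝ => (t : ℂ) ^ a k) x • A k := by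
    ext x
    by_cases hx : x ∈ Set.Ioc (0 : ℝ) 1 <;> simp [cpowSum, hx]
  rw [indicator_sum]
  refine hasMellin_finsetSum _ fun k _ => hasMellin_smul_const ?_ (A k)
  simpa only [one_div] using hasMellin_cpow_Ioc (a k) (hs k)

theorem isBigO_of_sub_cpowSum_isBigO {f : ℝ → E} {c : ℝ}
    (hexp : (fun x => f x - cpowSum A a x) =O[𝓝[>] 0] fun x : ℝ => x ^ c)
    (hb : ∀ k, b ≤ (a k).re) (hbc : b ≤ c) : f =O[𝓝[>] 0] fun x : ℝ => x ^ b := by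
  simpa only [sub_add_cancel] using
    (hexp.trans (isBigO_rpow_nhdsGT_zero_of_le hbc)).add (isBigO_cpowSum_nhdsGT_zero (A := A) hb)

end CpowSum

theorem differentiableOn_mellin_sub_indicator_Ioc {f p : ℝ → E} {β c : ℝ}
    (hf : LocallyIntegrableOn f (Set.Ioi 0)) (hp : LocallyIntegrableOn p (Set.Ioi 0))
    (htop : ∀ ε : ℝ, 0 < ε → f =O[atTop] fun x : ℝ => x ^ (-β + ε))
    (hexp : (fun x => f x - p x) =O[𝓝[>] 0] fun x : ℝ => x ^ c) :
    DifferentiableOn ℂ (mellin fun x => f x - (Set.Ioc 0 1).indicator p x)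
      {s : ℂ | -c < s.re ∧ s.re < β} := by
  have sub_eq_atTop : (fun x => f x - (Set.Ioc 0 1).indicator p x) =ᶠ[atTop] f := by
    filter_upwards [indicator_Ioc_eventuallyEq_atTop 0 1 p] with x hx
    rw [hx, Pi.zero_apply, sub_zero]
  have sub_eq_zero : (fun x => f x - (Set.Ioc 0 1).indicator p x) =ᶠ[𝓝[>] 0]
      fun x => f x - p x :=
    EventuallyEq.rfl.fun_sub (indicator_Ioc_eventuallyEq_nhdsGT one_pos p)
  exact differentiableOn_mellin_strip
    (hf.sub (locallyIntegrableOn_indicator hp measurableSet_Ioc))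
    (fun ε hε => sub_eq_atTop.trans_isBigO (htop ε hε)) (sub_eq_zero.trans_isBigO hexp)

theorem stmt19_general [CompleteSpace E] {ι : Type*} [Fintype ι] {f : ℝ → E} {β b c : ℝ}
    {A : ι → E} {a : ι → ℂ} (hloc : LocallyIntegrableOn f (Set.Ioi 0))
    (htop : ∀ ε : ℝ, 0 < ε → f =O[atTop] fun x : ℝ => x ^ (-β + ε))
    (hb : ∀ k, b ≤ (a k).re) (hbc : b ≤ c)
    (hexp : (fun x => f x - cpowSum A a x) =O[𝓝[>] 0] fun x : ℝ => x ^ c) :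
    (∀ s : ℂ, -b < s.re → s.re < β → MellinConvergent f s) ∧
    DifferentiableOn ℂ (mellin f) {s : ℂ | -b < s.re ∧ s.re < β} ∧
    ∃ F : ℂ → E, DifferentiableOn ℂ F {s : ℂ | -c < s.re ∧ s.re < β} ∧
      ∀ s : ℂ, -b < s.re → s.re < β → F s = mellin f s - ∑ k, (s + a k)⁻¹ • A k := by
  have hzero : f =O[𝓝[>] 0] fun x : ℝ => x ^ b := isBigO_of_sub_cpowSum_isBigO hexp hb hbc
  have hconv : ∀ s : ℂ, -b < s.re → s.re < β → MellinConvergent f s := fun _ =>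
    mellinConvergent_of_re_mem_strip hloc htop hzero
  have hsum : LocallyIntegrableOn (cpowSum A a) (Set.Ioi 0) :=
    (continuousOn_cpowSum A a).locallyIntegrableOn measurableSet_Ioi
  refine ⟨hconv, differentiableOn_mellin_strip hloc htop hzero, _,
    differentiableOn_mellin_sub_indicator_Ioc hloc hsum htop hexp, fun s hbs hsβ => ?_⟩
  have hpos : ∀ k, 0 < s.re + (a k).re := fun k => by linarith [hb k]
  have hpolar := hasMellin_indicator_cpowSum (A := A) hpos
  rw [(hasMellin_sub (hconv s hbs hsβ) hpolar.1).2, hpolar.2]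

end VectorValued

/-- Analytic continuation of the Mellin transform. Let `f` be locally integrable on `(0,∞)`
with `f(x) = O(x^{−β+ε})` as `x → ∞` for every `ε > 0`. Suppose there are complex numbers
`A₀, …, A_N` and exponents `a₀, …, a_N` with `−β < Re a₀`, `Re a_k` nondecreasing, and a real
`c > Re a_N` such that `f(x) − Σ A_k x^{a_k} = O(x^c)` as `x → 0⁺`. Then the Mellin transform
`𝓜f(s) = ∫₀^∞ x^{s−1} f(x) dx` converges and is holomorphic on `{−Re a₀ < Re s < β}`, and
`𝓜f(s) − Σ A_k/(s + a_k)` extends holomorphically to `{−c < Re s < β}`; i.e. `𝓜f` continues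
meromorphically with at most simple poles at `s = −a_k` of residue `A_k`. -/
theorem stmt19 (β : ℝ) (f : ℝ → ℂ)
    (hloc : LocallyIntegrableOn f (Set.Ioi 0))
    (hinf : ∀ ε : ℝ, 0 < ε → f =O[atTop] fun x : ℝ => x ^ (-β + ε))
    (N : ℕ) (A : Fin (N + 1) → ℂ) (a : Fin (N + 1) → ℂ)
    (ha0 : -β < (a 0).re)
    (hmono : Monotone fun k => (a k).re)
    (c : ℝ) (hc : (a (Fin.last N)).re < c)
    (h0 : (fun x : ℝ => f x - ∑ k, A k * (x : ℂ) ^ (a k)) =O[𝓝[>] (0 : ℝ)]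
      fun x : ℝ => x ^ c) :
    (∀ s : ℂ, -(a 0).re < s.re → s.re < β →
      IntegrableOn (fun x : ℝ => (x : ℂ) ^ (s - 1) * f x) (Set.Ioi 0)) ∧
    DifferentiableOn ℂ (fun s : ℂ => ∫ x in Set.Ioi (0 : ℝ), (x : ℂ) ^ (s - 1) * f x)
      {s : ℂ | -(a 0).re < s.re ∧ s.re < β} ∧
    ∃ F : ℂ → ℂ, DifferentiableOn ℂ F {s : ℂ | -c < s.re ∧ s.re < β} ∧
      ∀ s : ℂ, -(a 0).re < s.re → s.re < β →
        F s = (∫ x in Set.Ioi (0 : ℝ), (x : ℂ) ^ (s - 1) * f x) - ∑ k, A k / (s + a k) := by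
  simpa only [div_eq_inv_mul] using! stmt19_general hloc hinf (fun k => hmono (Fin.zero_le k))
    ((hmono (Fin.zero_le _)).trans hc.le) (by simpa only [cpowSum, smul_eq_mul, mul_comm] using h0)
end
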